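/- arXiv:1104.5035 — 3 statements merged into one kernel-verified Lean document; each statement's English description precedes it below -/
import Mathlib

section
/- Let A be a Noetherian ring, M a finitely generated A-module, and I an ideal with IM ≠ M. Then depth_I(M) ≥ n if and only if H^p_I(M) = 0 for all p < n. -/
open CategoryTheory

universe u

lemma CategoryTheory.ShortComplex.moduleCat_mono_homologyMap {R : Type*} [Ring R]
    {S₁ S₂ : ShortComplex (ModuleCat R)} (φ : S₁ ⟶ S₂)
    (h : ∀ (x : S₁.X₂) (y : S₂.X₁), S₁.g x = 0 → φ.τ₂ x = S₂.f y → ∃ z, S₁.f z = x) :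
    Mono (ShortComplex.homologyMap φ) := by
  rw [ShortComplex.mono_homologyMap_iff_up_to_refinements]
  intro A x hx y hxy
  let A' : Submodule R (A × S₁.X₁) :=
    LinearMap.eqLocus (x.hom ∘ₗ LinearMap.fst R A S₁.X₁) (S₁.f.hom ∘ₗ LinearMap.snd R A S₁.X₁)
  refine ⟨ModuleCat.of R A', ModuleCat.ofHom (LinearMap.fst R A S₁.X₁ ∘ₗ A'.subtype), ?_,
    ModuleCat.ofHom (LinearMap.snd R A S₁.X₁ ∘ₗ A'.subtype), ?_⟩
  · rw [ModuleCat.epi_iff_surjective]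
    intro a
    obtain ⟨z, hz⟩ := h (x a) (y a) (ConcreteCategory.congr_hom hx a)
      (ConcreteCategory.congr_hom hxy a)
    exact ⟨⟨(a, z), hz.symm⟩, rfl⟩
  · ext a
    exact a.2

namespace CategoryTheory.ProjectiveResolution

open CochainComplex.HomComplex

lemma extMk_eq_zero_iff_exists_next {C : Type*} [Category* C] [Abelian C] [HasExt C]
    {X Y : C} (P : ProjectiveResolution X) {n : ℕ} (f : P.complex.X n ⟶ Y) (m : ℕ)
    (hm : n + 1 = m) (hf : P.complex.d m n ≫ f = 0) :
    P.extMk f m hm hf = 0 ↔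
      ∃ g : P.complex.X ((ComplexShape.down ℕ).next n) ⟶ Y,
        P.complex.d n ((ComplexShape.down ℕ).next n) ≫ g = f := by
  obtain _ | n := n
  · rw [← P.extEquivCohomologyClass.apply_eq_iff_eq, extEquivCohomologyClass_extMk,
      extEquivCohomologyClass_zero, CohomologyClass.mk_eq_zero_iff,
      Cocycle.toSingleMk_mem_coboundaries_iff _ _ _ _ _ 1 (by simp)]
    have h₁ : P.cochainComplex.d 0 1 = 0 :=
      (CochainComplex.isZero_of_isStrictlyLE _ 0 1).eq_of_tgt _ _
    simp [h₁, eq_comm (a := (0 : P.complex.X 0 ⟶ Y)),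
      eq_comm (b := (P.cochainComplexXIso 0 0).hom ≫ f)]
  · rw [extMk_eq_zero_iff _ _ _ _ _ n rfl, ChainComplex.next_nat_succ]

end CategoryTheory.ProjectiveResolution

section

open Opposite Limits

variable {R : Type*} [Ring R] {C : Type*} [Category* C] [Abelian C] [Linear R C]
  [EnoughProjectives C] [HasExt C]

/-- The derived-functor `Ext` vanishes if and only if the derived-category `Ext` does. -/
lemma isZero_Ext_iff (n : ℕ) (X Y : C) :
    IsZero (((_root_.Ext R C n).obj (op X)).obj Y) ↔ Subsingleton (Abelian.Ext X Y n) := by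
  let P := ProjectiveResolution.of X
  rw [(P.isoExt n Y).isZero_iff, ← HomologicalComplex.exactAt_iff_isZero_homology,
    HomologicalComplex.exactAt_iff, ShortComplex.moduleCat_exact_iff]
  have hnext : (ComplexShape.up ℕ).next n = n + 1 := by simp
  refine ⟨fun h ↦ subsingleton_of_forall_eq 0 fun e ↦ ?_, fun h ↦ ?_⟩
  · obtain ⟨f, hf, rfl⟩ := P.extMk_surjective e (n + 1) rfl
    rw [P.extMk_eq_zero_iff_exists_next]
    refine h f ?_
    change P.complex.d _ _ ≫ f = 0
    rwa [hnext]
  · intro (f : P.complex.X n ⟶ Y) hf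
    replace hf : P.complex.d ((ComplexShape.up ℕ).next n) n ≫ f = 0 := hf
    rw [hnext] at hf
    exact (P.extMk_eq_zero_iff_exists_next f (n + 1) rfl hf).mp (Subsingleton.elim _ _)

lemma mono_Ext_map_app (n : ℕ) {X' X : C} (f : X' ⟶ X) (Y : C)
    (h : Function.Injective ((Abelian.Ext.mk₀ f).precomp Y (zero_add n))) :
    Mono (((_root_.Ext R C n).map f.op).app Y) := by
  let P' := ProjectiveResolution.of X'
  let P := ProjectiveResolution.of X
  let φ : P'.Hom P f := ⟨ProjectiveResolution.lift f P' P,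
    (ProjectiveResolution.lift_commutes_zero f P' P).trans (by simp)⟩
  let F := ((linearYoneda R C).obj Y).rightOp
  suffices Epi ((F.leftDerived n).map f) from
    inferInstanceAs (Mono ((F.leftDerived n).map f).unop)
  rw [F.leftDerived_map_eq n f φ.hom φ.hom_comp_π]
  suffices Epi ((F.mapHomologicalComplex _ ⋙ HomologicalComplex.homologyFunctor _ _ n).map φ.hom)
    by infer_instance
  let ψ : ((P.complex.linearYonedaObj R Y).sc n) ⟶ ((P'.complex.linearYonedaObj R Y).sc n) :=
    ShortComplex.unopMap ((HomologicalComplex.shortComplexFunctor _ _ n).map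
        ((F.mapHomologicalComplex _).map φ.hom))
  have hψ : Mono (ShortComplex.homologyMap ψ) := by
    apply ShortComplex.moduleCat_mono_homologyMap
    intro (g : P.complex.X n ⟶ Y) (k : P'.complex.X ((ComplexShape.down ℕ).next n) ⟶ Y) hg hgk
    replace hg : P.complex.d ((ComplexShape.down ℕ).prev n) n ≫ g = 0 := hg
    rw [ChainComplex.prev] at hg
    replace hgk : φ.hom.f n ≫ g = P'.complex.d n ((ComplexShape.down ℕ).next n) ≫ k := hgk
    refine (P.extMk_eq_zero_iff_exists_next g (n + 1) rfl hg).mp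
      ((injective_iff_map_eq_zero _).mp h _ ?_)
    change (Abelian.Ext.mk₀ f).comp (P.extMk g (n + 1) rfl hg) (zero_add n) = 0
    rw [ProjectiveResolution.mk₀_comp_extMk g (n + 1) rfl hg φ,
      ProjectiveResolution.extMk_eq_zero_iff_exists_next]
    exact ⟨k, hgk.symm⟩
  change Epi (ShortComplex.homologyMap (ShortComplex.opMap ψ))
  rw [← MorphismProperty.epimorphisms.iff]
  refine ((MorphismProperty.epimorphisms _).arrow_mk_iso_iff (Arrow.isoMk
    (ShortComplex.homologyOpIso _).symm (ShortComplex.homologyOpIso _).symm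
      (ShortComplex.homologyOpIso_inv_naturality ψ).symm)).mp ?_
  exact inferInstanceAs (Epi (ShortComplex.homologyMap ψ).op)

variable {A : Type u} [CommRing A]

/-- If `Ext K M i` vanishes for `i < n` and all finite `K` supported in `V(I)`, then any surjection
from such a module induces an injection on `Ext _ M n`. -/
lemma precomp_mk₀_injective_of_surjective [IsNoetherianRing A] (I : Ideal A) (M : ModuleCat.{u} A)
    {N N' : ModuleCat.{u} A} [Module.Finite A N]
    (hN : Module.support A N ⊆ PrimeSpectrum.zeroLocus I)
    (f : N ⟶ N') (hf : Function.Surjective f) (n : ℕ)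
    (h : ∀ K : ModuleCat.{u} A, Module.Finite A K →
      Module.support A K ⊆ PrimeSpectrum.zeroLocus I → ∀ i < n, Subsingleton (Abelian.Ext K M i)) :
    Function.Injective ((Abelian.Ext.mk₀ f).precomp M (zero_add n)) := by
  have : Epi f := (ModuleCat.epi_iff_surjective f).mpr hf
  obtain _ | n := n
  · exact Abelian.Ext.precomp_mk₀_injective_of_epi M f
  let S := ShortComplex.mk (ModuleCat.ofHom (LinearMap.ker f.hom).subtype) f (by ext x; exact x.2)
  have hS : S.ShortExact :=
    { exact := by
        rw [ShortComplex.moduleCat_exact_iff]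
        exact fun x hx ↦ ⟨⟨x, hx⟩, rfl⟩
      mono_f := (ModuleCat.mono_iff_injective _).mpr Subtype.val_injective
      epi_g := this }
  rw [injective_iff_map_eq_zero]
  intro x hx
  obtain ⟨y, rfl⟩ := Abelian.Ext.contravariant_sequence_exact₃ hS M x hx (add_comm 1 n)
  have := h S.X₁ (inferInstanceAs (Module.Finite A (LinearMap.ker f.hom)))
    ((Module.support_subset_of_injective (LinearMap.ker f.hom).subtype
      Subtype.val_injective).trans hN) n n.lt_succ_self
  rw [Subsingleton.elim y 0, Abelian.Ext.comp_zero]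

lemma support_quotient_pow (I : Ideal A) (t : ℕ) :
    Module.support A (A ⧸ I ^ t) ⊆ PrimeSpectrum.zeroLocus I := by
  rw [Module.support_eq_zeroLocus, Ideal.annihilator_quotient]
  obtain rfl | ht := eq_or_ne t 0
  · simp
  · rw [PrimeSpectrum.zeroLocus_pow _ ht]

lemma isZero_localCohomology_obj (I : Ideal A) (M : ModuleCat.{u} A) (p : ℕ)
    (h : ∀ t : ℕ, Subsingleton (Abelian.Ext (ModuleCat.of A (A ⧸ I ^ t)) M p)) :
    IsZero ((localCohomology I p).obj M) := by
  have hc := isColimitOfPreserves ((evaluation _ _).obj M)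
    (colimit.isColimit (localCohomology.diagram (localCohomology.idealPowersDiagram I) p))
  rw [IsZero.iff_id_eq_zero]
  refine hc.hom_ext fun j ↦ ?_
  exact ((isZero_Ext_iff (R := A) p _ M).mpr (h j.unop.unop)).eq_of_src _ _

lemma subsingleton_Ext_of_isZero_localCohomology_obj [IsNoetherianRing A] (I : Ideal A)
    (M : ModuleCat.{u} A) (p : ℕ) (h : IsZero ((localCohomology I p).obj M))
    (h' : ∀ K : ModuleCat.{u} A, Module.Finite A K →
      Module.support A K ⊆ PrimeSpectrum.zeroLocus I → ∀ i < p, Subsingleton (Abelian.Ext K M i))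
    (t : ℕ) : Subsingleton (Abelian.Ext (ModuleCat.of A (A ⧸ I ^ t)) M p) := by
  have hc := isColimitOfPreserves ((evaluation _ _).obj M)
    (colimit.isColimit (localCohomology.diagram (localCohomology.idealPowersDiagram I) p))
  have (j j' : ℕᵒᵖᵒᵖ) (φ : j ⟶ j') :
      Mono ((localCohomology.diagram (localCohomology.idealPowersDiagram I) p ⋙
        (evaluation _ _).obj M).map φ) := by
    refine mono_Ext_map_app (R := A) p
      ((localCohomology.ringModIdeals (localCohomology.idealPowersDiagram I)).map φ.unop) M ?_
    have : Module.Finite A ((localCohomology.ringModIdeals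
        (localCohomology.idealPowersDiagram I)).obj j'.unop) :=
      inferInstanceAs (Module.Finite A (A ⧸ I ^ j'.unop.unop))
    exact precomp_mk₀_injective_of_surjective I M (support_quotient_pow I _) _
      (Submodule.factor_surjective
        ((localCohomology.idealPowersDiagram I).map φ.unop).down.down) p h'
  have : AB5OfSize.{0, 0} (ModuleCat.{u} A) := AB5OfSize_of_univLE.{0, 0, u, u} _
  have hm := hc.mono_ι_app_of_isFiltered (op (op t))
  exact (isZero_Ext_iff (R := A) p _ M).mp (@IsZero.of_mono _ _ _ _ _ _ hm h)

lemma exists_isRegular_of_isZero_localCohomology_obj [IsNoetherianRing A] (I : Ideal A)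
    (M : ModuleCat.{u} A) [Module.Finite A M] (hIM : I • (⊤ : Submodule A M) < ⊤)
    (n : ℕ) (h : ∀ p < n, IsZero ((localCohomology I p).obj M)) :
    ∃ rs : List A, rs.length = n ∧ (∀ a ∈ rs, a ∈ I) ∧ RingTheory.Sequence.IsRegular M rs := by
  induction n with
  | zero =>
    exact ModuleCat.exists_isRegular_of_exists_subsingleton_ext I 0 M hIM
      (ModuleCat.of A (A ⧸ I)) (by rw [Module.support_eq_zeroLocus, Ideal.annihilator_quotient])
      (by simp)
  | succ n ih =>
    obtain ⟨rs, rfl, hmem, hreg⟩ := ih fun p hp ↦ h p (hp.trans n.lt_succ_self)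
    have hExt (K : ModuleCat.{u} A) (_ : Module.Finite A K)
        (hK : Module.support A K ⊆ PrimeSpectrum.zeroLocus I) :=
      ModuleCat.subsingleton_ext_of_exists_isRegular I K hK M hIM rs hmem hreg
    refine ModuleCat.exists_isRegular_of_exists_subsingleton_ext I _ M hIM
      (ModuleCat.of A (A ⧸ I ^ 1))
      (by rw [Module.support_eq_zeroLocus, Ideal.annihilator_quotient, pow_one]) fun p hp ↦ ?_
    obtain hp | rfl := Nat.lt_succ_iff_lt_or_eq.mp hp
    · exact hExt _ (inferInstanceAs (Module.Finite A (A ⧸ I ^ 1))) (support_quotient_pow I 1) p hp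
    · exact subsingleton_Ext_of_isZero_localCohomology_obj I M _ (h _ hp) hExt 1

end

/-- Let `A` be a Noetherian ring, `M` a finitely generated `A`-module, and `I` an ideal
with `IM ≠ M`.  Then `depth_I(M) ≥ n` (i.e. there exists an `M`-regular sequence of
length `n` consisting of elements of `I`) if and only if the local cohomology modules
`H^p_I(M)` vanish for all `p < n`. -/
theorem depth_ge_iff_localCohomology_isZero (A : Type u) [CommRing A] [IsNoetherianRing A]
    (I : Ideal A) (M : Type u) [AddCommGroup M] [Module A M] [Module.Finite A M]
    (hIM : I • (⊤ : Submodule A M) ≠ ⊤) (n : ℕ) :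
    (∃ rs : List A, rs.length = n ∧ (∀ a ∈ rs, a ∈ I) ∧
      RingTheory.Sequence.IsRegular M rs) ↔
      ∀ p : ℕ, p < n →
        Limits.IsZero ((localCohomology I p).obj (ModuleCat.of A M)) := by
  refine ⟨fun ⟨rs, hlen, hmem, hreg⟩ p hp ↦ ?_, fun h ↦
    exists_isRegular_of_isZero_localCohomology_obj I (ModuleCat.of A M) hIM.lt_top n h⟩
  refine isZero_localCohomology_obj I _ p fun t ↦ ?_
  exact ModuleCat.subsingleton_ext_of_exists_isRegular I (ModuleCat.of A (A ⧸ I ^ t))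
    (support_quotient_pow I t) (ModuleCat.of A M) hIM.lt_top rs hmem hreg p (hp.trans_eq hlen.symm)
end

section
/- Let A be a regular local Noetherian ring of dimension d with maximal ideal m. Then for every finitely generated A-module M and every p, there is an isomorphism H^p_m(M) ≅ Hom_A(Ext^{d-p}_A(M, A), H^d_m(A)). -/
open CategoryTheory Opposite IsLocalRing

universe u

namespace ModuleCat
variable {A : Type u} [CommRing A] {M N P : Type u} [AddCommGroup M] [Module A M]
  [AddCommGroup N] [Module A N] [AddCommGroup P] [Module A P]

lemma shortExact_ofHom {f : M →ₗ[A] N} {g : N →ₗ[A] P} (hf : Function.Injective f)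
    (hg : Function.Surjective g) (hfg : Function.Exact f g) :
    (ShortComplex.mk (ofHom f) (ofHom g) (hom_ext hfg.linearMap_comp_eq_zero)).ShortExact where
  exact := shortComplex_exact _ hfg
  mono_f := (mono_iff_injective _).2 hf
  epi_g := (epi_iff_surjective _).2 hg

end ModuleCat

namespace CategoryTheory.ProjectiveResolution
open CochainComplex HomComplex Abelian
variable {C : Type*} [Category* C] [Abelian C] [HasExt C] {X Y : C} (R : ProjectiveResolution X)

lemma extMk_eq_zero_iff_of_zero (f : R.complex.X 0 ⟶ Y) (m : ℕ) (hm : 0 + 1 = m)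
    (hf : R.complex.d m 0 ≫ f = 0) : R.extMk f m hm hf = 0 ↔ f = 0 := by
  refine ⟨fun h ↦ ?_, fun h ↦ by subst h; simp⟩
  simp only [← R.extEquivCohomologyClass.apply_eq_iff_eq,
    extEquivCohomologyClass_extMk, extEquivCohomologyClass_zero,
    CohomologyClass.mk_eq_zero_iff] at h
  rw [Cocycle.toSingleMk_mem_coboundaries_iff _ _ _ _ _ 1 (by lia)] at h
  obtain ⟨g, hg⟩ := h
  have h0 : Limits.IsZero (R.cochainComplex.X 1) :=
    R.cochainComplex.isZero_of_isStrictlyLE 0 1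
  rw [h0.eq_of_src g 0, Limits.comp_zero] at hg
  rw [← cancel_epi (R.cochainComplexXIso _ 0 rfl).hom]
  simpa using hg.symm

lemma extMk_eq_zero_iff_next (n : ℕ) (f : R.complex.X n ⟶ Y) (m : ℕ) (hm : n + 1 = m)
    (hf : R.complex.d m n ≫ f = 0) :
    R.extMk f m hm hf = 0 ↔
      ∃ g : R.complex.X ((ComplexShape.down ℕ).next n) ⟶ Y, R.complex.d n _ ≫ g = f := by
  cases n with
  | zero =>
    rw [extMk_eq_zero_iff_of_zero]
    simp [eq_comm]
  | succ n =>
    rw [extMk_eq_zero_iff _ _ _ _ _ ((ComplexShape.down ℕ).next (n + 1)) (by simp)]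

lemma smul_extMk {A : Type*} [CommRing A] [Linear A C] {n : ℕ} (a : A) (f : R.complex.X n ⟶ Y)
    (m : ℕ) (hm : n + 1 = m) (hf : R.complex.d m n ≫ f = 0) :
    a • R.extMk f m hm hf = R.extMk (a • f) m hm (by simp [hf]) := by
  rw [Ext.smul_eq_comp_mk₀, extMk_comp_mk₀]
  simp
end CategoryTheory.ProjectiveResolution

namespace CategoryTheory.ProjectiveResolution
open Abelian

variable {A : Type u} [CommRing A] {X X' : ModuleCat.{u} A}

/-- The complex `Hom(P, Y)`, seen in the opposite category. -/
noncomputable abbrev homComplexOp (P : ProjectiveResolution X) (Y : ModuleCat.{u} A) :=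
  (((linearYoneda A (ModuleCat.{u} A)).obj Y).rightOp.mapHomologicalComplex
    (ComplexShape.down ℕ)).obj P.complex

/-- The short complex computing `Ext` in degree `n`. -/
noncomputable abbrev homSc (P : ProjectiveResolution X) (Y : ModuleCat.{u} A) (n : ℕ) :
    ShortComplex (ModuleCat.{u} A) :=
  ((P.homComplexOp Y).sc n).unop

variable (P : ProjectiveResolution X) (P' : ProjectiveResolution X') (Y : ModuleCat.{u} A) (n : ℕ)

/-- Cocycles. -/
noncomputable def homCocycles : Submodule A (P.complex.X n ⟶ Y) :=
  LinearMap.ker (P.homSc Y n).g.hom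

lemma mem_homCocycles (f : P.complex.X n ⟶ Y) :
    f ∈ P.homCocycles Y n ↔ P.complex.d ((ComplexShape.down ℕ).prev n) n ≫ f = 0 := Iff.rfl

/-- The map from cocycles to `Ext`. -/
noncomputable def homCocyclesToExt : P.homCocycles Y n →ₗ[A] Abelian.Ext X Y n where
  toFun f := P.extMk f.1 _ (by simp) ((P.mem_homCocycles Y n f.1).1 f.2)
  map_add' f g := (P.add_extMk _ _ _ _ _ _).symm
  map_smul' a f := (P.smul_extMk a _ _ _ _).symm

lemma homCocyclesToExt_surjective : Function.Surjective (P.homCocyclesToExt Y n) := fun x ↦ by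
  obtain ⟨f, hf, rfl⟩ := P.extMk_surjective x ((ComplexShape.down ℕ).prev n) (by simp)
  exact ⟨⟨f, hf⟩, rfl⟩

lemma homCocyclesToExt_eq_zero_iff (f : P.homCocycles Y n) :
    P.homCocyclesToExt Y n f = 0 ↔ ∃ g, (P.homSc Y n).f.hom g = f.1 :=
  P.extMk_eq_zero_iff_next n f.1 _ (by simp) ((P.mem_homCocycles Y n f.1).1 f.2)

/-- `Ext` as the homology of `Hom(P, Y)`. -/
noncomputable def homScLeftHomologyData : (P.homSc Y n).LeftHomologyData :=
  let hi := ModuleCat.kernelIsLimit (P.homSc Y n).g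
  let π : ModuleCat.of A (P.homCocycles Y n) ⟶ ModuleCat.of A (Abelian.Ext X Y n) :=
    ModuleCat.ofHom (P.homCocyclesToExt Y n)
  let f' : (P.homSc Y n).X₁ ⟶ ModuleCat.of A (P.homCocycles Y n) :=
    hi.lift (Limits.KernelFork.ofι _ (P.homSc Y n).zero)
  have hf' (x : (P.homSc Y n).X₁) : (f'.hom x).1 = (P.homSc Y n).f.hom x :=
    ConcreteCategory.congr_hom (hi.fac (Limits.KernelFork.ofι _ (P.homSc Y n).zero)
      Limits.WalkingParallelPair.zero) x
  have w : f' ≫ π = 0 :=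
    ModuleCat.hom_ext <| LinearMap.ext fun x ↦
      (P.homCocyclesToExt_eq_zero_iff Y n (f'.hom x)).2 ⟨x, (hf' x).symm⟩
  have ex : (ShortComplex.mk f' π w).Exact := by
    rw [ShortComplex.moduleCat_exact_iff]
    intro x hx
    obtain ⟨g, hg⟩ := (P.homCocyclesToExt_eq_zero_iff Y n x).1 hx
    exact ⟨g, Subtype.ext ((hf' g).trans hg)⟩
  have : Epi (ShortComplex.mk f' π w).g :=
    (ModuleCat.epi_iff_surjective _).2 (P.homCocyclesToExt_surjective Y n)
  { K := ModuleCat.of A (P.homCocycles Y n)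
    H := ModuleCat.of A (Abelian.Ext X Y n)
    i := ModuleCat.ofHom (P.homCocycles Y n).subtype
    π := π
    wi := by ext x; exact x.2
    hi := hi
    wπ := w
    hπ := ex.gIsCokernel }

/-- `Ext` as the homology of `Hom(P, Y)`, in the opposite category. -/
noncomputable def homComplexOpRightHomologyData :
    ((P.homComplexOp Y).sc n).RightHomologyData :=
  (P.homScLeftHomologyData Y n).op

/-- Comparison of the left derived functor of `Hom(-, Y)` with `Ext`. -/
noncomputable def leftDerivedIsoExt :
    (((linearYoneda A (ModuleCat.{u} A)).obj Y).rightOp.leftDerived n).obj X ≅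
      op (ModuleCat.of A (Abelian.Ext X Y n)) :=
  P.isoLeftDerivedObj _ n ≪≫ (P.homComplexOpRightHomologyData Y n).homologyIso

variable {P P'} in
/-- A morphism of resolutions induces a morphism of short complexes. -/
noncomputable def homScMap (φ : P'.complex ⟶ P.complex) : P.homSc Y n ⟶ P'.homSc Y n :=
  ShortComplex.unopMap ((HomologicalComplex.shortComplexFunctor _ _ n).map
    ((((linearYoneda A (ModuleCat.{u} A)).obj Y).rightOp.mapHomologicalComplex _).map φ))

variable {P P'} in
/-- A morphism of resolutions induces precomposition on `Ext`. -/
noncomputable def homScMapData {g : X' ⟶ X} (φ : Hom P' P g) :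
    ShortComplex.LeftHomologyMapData (homScMap Y n φ.hom)
      (P.homScLeftHomologyData Y n) (P'.homScLeftHomologyData Y n) where
  φK := ModuleCat.ofHom (((homScMap Y n φ.hom).τ₂.hom.comp
      (P.homCocycles Y n).subtype).codRestrict (P'.homCocycles Y n) fun x ↦ by
    have := ConcreteCategory.congr_hom (homScMap Y n φ.hom).comm₂₃ x.1
    exact this.trans ((congrArg (homScMap Y n φ.hom).τ₃.hom x.2).trans (map_zero _)))
  φH := ModuleCat.ofHom ((Abelian.Ext.mk₀ g).precompOfLinear A Y (zero_add n))
  commi := rfl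
  commf' := by
    refine (cancel_mono (P'.homScLeftHomologyData Y n).i).1 (Eq.trans (Category.assoc _ _ _) ?_)
    refine Eq.trans (b := (P.homScLeftHomologyData Y n).f' ≫ (P.homScLeftHomologyData Y n).i ≫
      (homScMap Y n φ.hom).τ₂) rfl ?_
    rw [ShortComplex.LeftHomologyData.f'_i_assoc, Category.assoc,
      ShortComplex.LeftHomologyData.f'_i, ShortComplex.Hom.comm₁₂]
  commπ := ModuleCat.hom_ext <| LinearMap.ext fun x ↦
    mk₀_comp_extMk x.1 _ (by simp) ((P.mem_homCocycles Y n x.1).1 x.2) φ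

lemma leftDerivedIsoExt_naturality (g : X' ⟶ X) :
    (((linearYoneda A (ModuleCat.{u} A)).obj Y).rightOp.leftDerived n).map g ≫
      (P.leftDerivedIsoExt Y n).hom =
    (P'.leftDerivedIsoExt Y n).hom ≫
      Quiver.Hom.op (ModuleCat.ofHom ((Abelian.Ext.mk₀ g).precompOfLinear A Y (zero_add n))) := by
  have hφ : (ProjectiveResolution.lift g P' P).f 0 ≫ P.π.f 0 = P'.π.f 0 ≫ g :=
    ProjectiveResolution.lift_commutes_zero g P' P
  let φ : Hom P' P g := ⟨ProjectiveResolution.lift g P' P, by simpa using! hφ⟩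
  let γ : ShortComplex.RightHomologyMapData
      ((HomologicalComplex.shortComplexFunctor _ _ n).map
        ((((linearYoneda A (ModuleCat.{u} A)).obj Y).rightOp.mapHomologicalComplex _).map φ.hom))
      (P'.homComplexOpRightHomologyData Y n) (P.homComplexOpRightHomologyData Y n) :=
    (homScMapData Y n φ).op
  refine (P'.isoLeftDerivedObj_hom_naturality_assoc g P φ.hom hφ _ n _).trans ?_
  refine Eq.trans ?_ (Category.assoc _ _ _).symm
  exact congrArg _ γ.homologyMap_comm

end CategoryTheory.ProjectiveResolution

namespace ModuleCat
variable {A : Type u} [CommRing A]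

/-- Comparison of the two definitions of `Ext`. -/
noncomputable def extIso (X Y : ModuleCat.{u} A) (n : ℕ) :
    ((_root_.Ext A (ModuleCat.{u} A) n).obj (op X)).obj Y ≅ of A (Abelian.Ext X Y n) :=
  ((ProjectiveResolution.of X).leftDerivedIsoExt Y n).unop.symm

lemma extIso_naturality {X X' : ModuleCat.{u} A} (g : X' ⟶ X) (Y : ModuleCat.{u} A) (n : ℕ) :
    ((_root_.Ext A (ModuleCat.{u} A) n).map g.op).app Y ≫ (extIso X' Y n).hom =
      (extIso X Y n).hom ≫
        ofHom ((Abelian.Ext.mk₀ g).precompOfLinear A Y (zero_add n)) := by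
  have h := congrArg Quiver.Hom.unop ((ProjectiveResolution.of X).leftDerivedIsoExt_naturality
    (ProjectiveResolution.of X') Y n g)
  exact (Iso.comp_inv_eq ((ProjectiveResolution.of X').leftDerivedIsoExt Y n).unop).2
    (((Iso.eq_inv_comp ((ProjectiveResolution.of X).leftDerivedIsoExt Y n).unop).2 h).trans
      (Category.assoc _ _ _).symm)
end ModuleCat

section LocalCohomology

variable {A : Type u} [CommRing A] (I : Ideal A)

/-- The quotient of the ring by a power of an ideal, as an object of the category of modules. -/
abbrev powQuot (t : ℕ) : ModuleCat.{u} A := ModuleCat.of A (A ⧸ I ^ t)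

/-- The transition maps between quotients by powers of an ideal. -/
noncomputable def powQuotMap {s t : ℕ} (h : s ≤ t) : powQuot I t ⟶ powQuot I s :=
  ModuleCat.ofHom (Submodule.mapQ (I ^ t) (I ^ s) LinearMap.id (Ideal.pow_le_pow_right h))

lemma powQuotMap_self (t : ℕ) : powQuotMap I le_rfl = 𝟙 (powQuot I t) := by
  ext
  rfl

lemma powQuotMap_comp {r s t : ℕ} (h : r ≤ s) (h' : s ≤ t) :
    powQuotMap I h' ≫ powQuotMap I h = powQuotMap I (h.trans h') := by
  ext
  rfl

/-- The terms of the direct system computing local cohomology. -/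
abbrev ExtPowQuot (M : ModuleCat.{u} A) (p t : ℕ) : Type u := Abelian.Ext (powQuot I t) M p

/-- The transition maps of the direct system computing local cohomology. -/
noncomputable def extPowQuotMap (M : ModuleCat.{u} A) (p s t : ℕ) (h : s ≤ t) :
    Abelian.Ext (powQuot I s) M p →ₗ[A] Abelian.Ext (powQuot I t) M p :=
  (Abelian.Ext.mk₀ (powQuotMap I h)).precompOfLinear A M (zero_add p)

lemma extPowQuotMap_apply (M : ModuleCat.{u} A) (p s t : ℕ) (h : s ≤ t)
    (x : Abelian.Ext (powQuot I s) M p) :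
    extPowQuotMap I M p s t h x = (Abelian.Ext.mk₀ (powQuotMap I h)).comp x (zero_add p) := rfl

instance (M : ModuleCat.{u} A) (p : ℕ) :
    DirectedSystem (ExtPowQuot I M p) (extPowQuotMap I M p · · ·) where
  map_self t x := by simp [extPowQuotMap_apply, powQuotMap_self]
  map_map r s t h h' x := by
    simp [extPowQuotMap_apply, ← powQuotMap_comp I h h', ← Abelian.Ext.mk₀_comp_mk₀_assoc]

/-- Local cohomology as an elementary direct limit. -/
abbrev LocCoh (p : ℕ) (M : ModuleCat.{u} A) : Type u :=
  Module.DirectLimit (ExtPowQuot I M p) (extPowQuotMap I M p)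

/-- The diagram defining local cohomology of a fixed module. -/
noncomputable abbrev locCohDiagram (p : ℕ) (M : ModuleCat.{u} A) : ℕ ⥤ ModuleCat.{u} A :=
  opOp ℕ ⋙ localCohomology.diagram (localCohomology.idealPowersDiagram I) p ⋙
    (evaluation _ _).obj M

/-- The terms of the diagram defining local cohomology. -/
noncomputable def locCohDiagramIso (p : ℕ) (M : ModuleCat.{u} A) (t : ℕ) :
    (locCohDiagram I p M).obj t ≅ ModuleCat.of A (ExtPowQuot I M p t) :=
  ModuleCat.extIso (powQuot I t) M p

lemma locCohDiagramIso_naturality (p : ℕ) (M : ModuleCat.{u} A) {s t : ℕ} (h : s ⟶ t) :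
    (locCohDiagram I p M).map h ≫ (locCohDiagramIso I p M t).hom =
      (locCohDiagramIso I p M s).hom ≫ ModuleCat.ofHom (extPowQuotMap I M p s t h.le) :=
  ModuleCat.extIso_naturality (powQuotMap I h.le) M p

/-- The maps to the elementary direct limit. -/
noncomputable def locCohOf (p : ℕ) (M : ModuleCat.{u} A) (t : ℕ) :
    ModuleCat.of A (ExtPowQuot I M p t) ⟶ ModuleCat.of A (LocCoh I p M) :=
  ModuleCat.ofHom (Module.DirectLimit.of A ℕ (ExtPowQuot I M p) (extPowQuotMap I M p) t)

lemma extPowQuotMap_locCohOf (p : ℕ) (M : ModuleCat.{u} A) {s t : ℕ} (h : s ≤ t) :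
    ModuleCat.ofHom (extPowQuotMap I M p s t h) ≫ locCohOf I p M t = locCohOf I p M s :=
  ModuleCat.hom_ext (LinearMap.ext fun _ ↦ Module.DirectLimit.of_f)

/-- The elementary direct limit as a cocone. -/
noncomputable def locCohCocone (p : ℕ) (M : ModuleCat.{u} A) :
    Limits.Cocone (locCohDiagram I p M) where
  pt := ModuleCat.of A (LocCoh I p M)
  ι :=
    { app t := (locCohDiagramIso I p M t).hom ≫ locCohOf I p M t
      naturality s t h := by
        refine Eq.trans (Eq.trans (Category.assoc _ _ _).symm ?_) (Category.comp_id _).symm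
        rw [locCohDiagramIso_naturality, Category.assoc, extPowQuotMap_locCohOf] }

lemma extPowQuotMap_comp_cocone (p : ℕ) (M : ModuleCat.{u} A)
    (c : Limits.Cocone (locCohDiagram I p M)) {s t : ℕ} (h : s ≤ t) :
    ModuleCat.ofHom (extPowQuotMap I M p s t h) ≫ (locCohDiagramIso I p M t).inv ≫ c.ι.app t =
      (locCohDiagramIso I p M s).inv ≫ c.ι.app s := by
  rw [Iso.eq_inv_comp, ← reassoc_of% locCohDiagramIso_naturality I p M (homOfLE h),
    Iso.hom_inv_id_assoc]
  exact c.w (homOfLE h)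

/-- The universal property of the elementary direct limit. -/
noncomputable def locCohDesc (p : ℕ) (M : ModuleCat.{u} A) {N : ModuleCat.{u} A}
    (φ : ∀ t, ModuleCat.of A (ExtPowQuot I M p t) ⟶ N)
    (hφ : ∀ s t (h : s ≤ t), ModuleCat.ofHom (extPowQuotMap I M p s t h) ≫ φ t = φ s) :
    ModuleCat.of A (LocCoh I p M) ⟶ N :=
  ModuleCat.ofHom (Module.DirectLimit.lift A ℕ (ExtPowQuot I M p) (extPowQuotMap I M p)
    (fun t ↦ (φ t).hom) fun s t h x ↦
      LinearMap.congr_fun (congrArg ModuleCat.Hom.hom (hφ s t h)) x)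

lemma locCohOf_desc (p : ℕ) (M : ModuleCat.{u} A) {N : ModuleCat.{u} A}
    (φ : ∀ t, ModuleCat.of A (ExtPowQuot I M p t) ⟶ N)
    (hφ : ∀ s t (h : s ≤ t), ModuleCat.ofHom (extPowQuotMap I M p s t h) ≫ φ t = φ s)
    (t : ℕ) : locCohOf I p M t ≫ locCohDesc I p M φ hφ = φ t :=
  ModuleCat.hom_ext (LinearMap.ext fun x ↦ Module.DirectLimit.lift_of (fun t ↦ (φ t).hom)
    (fun s t h x ↦ LinearMap.congr_fun (congrArg ModuleCat.Hom.hom (hφ s t h)) x) x)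

lemma locCoh_hom_ext (p : ℕ) (M : ModuleCat.{u} A) {N : ModuleCat.{u} A}
    {f g : ModuleCat.of A (LocCoh I p M) ⟶ N}
    (h : ∀ t, locCohOf I p M t ≫ f = locCohOf I p M t ≫ g) : f = g :=
  ModuleCat.hom_ext (Module.DirectLimit.hom_ext fun t ↦ congrArg ModuleCat.Hom.hom (h t))

/-- The elementary direct limit is a colimit. -/
noncomputable def locCohCoconeIsColimit (p : ℕ) (M : ModuleCat.{u} A) :
    Limits.IsColimit (locCohCocone I p M) where
  desc c := locCohDesc I p M _ fun _ _ h ↦ extPowQuotMap_comp_cocone I p M c h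
  fac c t := (Category.assoc _ _ _).trans <|
    (congrArg ((locCohDiagramIso I p M t).hom ≫ ·) (locCohOf_desc I p M _ _ t)).trans
      (Iso.hom_inv_id_assoc _ _)
  uniq c m h := by
    refine locCoh_hom_ext I p M fun t ↦ ?_
    rw [locCohOf_desc, Iso.eq_inv_comp, ← h]
    exact (Category.assoc _ _ _).symm

/-- The local cohomology of a module is the elementary direct limit. -/
noncomputable def localCohomologyIso (p : ℕ) (M : ModuleCat.{u} A) :
    (localCohomology I p).obj M ≅ ModuleCat.of A (LocCoh I p M) :=
  Limits.colimitObjIsoColimitCompEvaluation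
      (localCohomology.diagram (localCohomology.idealPowersDiagram I) p) M ≪≫
    (Functor.Final.colimitIso (opOpEquivalence ℕ).inverse
      (localCohomology.diagram (localCohomology.idealPowersDiagram I) p ⋙
        (evaluation _ _).obj M)).symm ≪≫
    (Limits.colimit.isColimit _).coconePointUniqueUpToIso (locCohCoconeIsColimit I p M)

end LocalCohomology

section RegularSequence
open RingTheory.Sequence

lemma exists_notMem_sq_notMem_minimalPrimes (A : Type u) [CommRing A] [IsNoetherianRing A]
    [IsLocalRing A] (h : ringKrullDim A ≠ 0) :
    ∃ x ∈ maximalIdeal A, x ∉ maximalIdeal A ^ 2 ∧ ∀ P ∈ minimalPrimes A, x ∉ P := by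
  have hmin : maximalIdeal A ∉ minimalPrimes A := fun hm ↦ h <| by
    rw [← maximalIdeal_height_eq_ringKrullDim, Ideal.height_eq_zero_iff.2 hm]
    rfl
  have hfin := minimalPrimes.finite_of_isNoetherianRing A
  by_contra! hx
  have hsub : (maximalIdeal A : Set A) ⊆ ⋃ i ∈ (↑(insert (maximalIdeal A ^ 2) hfin.toFinset) :
      Set (Ideal A)), (i : Set A) := by
    intro x hxm
    by_cases h2 : x ∈ maximalIdeal A ^ 2
    · exact Set.mem_biUnion (by simp) h2
    · obtain ⟨P, hP, hxP⟩ := hx x hxm h2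
      exact Set.mem_biUnion (by simp [hP]) hxP
  have := (Ideal.subset_union_prime (f := fun i : Ideal A ↦ i) (maximalIdeal A ^ 2)
    (maximalIdeal A ^ 2) (by
      intro i hi h1 _
      have : i ∈ minimalPrimes A := by simpa [h1] using hi
      exact Ideal.IsMinimalPrime.isPrime this)).1 hsub
  obtain ⟨i, hi, hle⟩ := this
  rcases Finset.mem_insert.1 hi with rfl | hi
  · have hbot : maximalIdeal A = ⊥ :=
      Submodule.eq_bot_of_le_smul_of_le_jacobson_bot (maximalIdeal A) (maximalIdeal A)
        (IsNoetherian.noetherian _) (by rwa [smul_eq_mul, ← sq])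
        (IsLocalRing.maximalIdeal_le_jacobson _)
    obtain ⟨P, hP, -⟩ := Ideal.exists_minimalPrimes_le (bot_le : ⊥ ≤ maximalIdeal A)
    have := Ideal.IsMinimalPrime.isPrime hP
    have : P = maximalIdeal A :=
      le_antisymm (le_maximalIdeal this.ne_top) (by rw [hbot]; exact bot_le)
    exact hmin (this ▸ hP)
  · have hP : i ∈ minimalPrimes A := by simpa using hi
    have := Ideal.IsMinimalPrime.isPrime hP
    have : i = maximalIdeal A := le_antisymm (le_maximalIdeal this.ne_top) hle
    exact hmin (this ▸ hP)

lemma exists_span_insert_erase_eq {A : Type u} [CommRing A] [IsLocalRing A] [DecidableEq A]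
    (s : Finset A) (hs : Ideal.span (s : Set A) = maximalIdeal A) (x : A)
    (hx : x ∈ maximalIdeal A) (hx2 : x ∉ maximalIdeal A ^ 2) :
    ∃ a ∈ s, Ideal.span (insert x (s.erase a : Set A)) = maximalIdeal A := by
  rw [← hs, Submodule.mem_span_finset] at hx
  obtain ⟨c, -, rfl⟩ := hx
  obtain ⟨a, ha, hc⟩ : ∃ a ∈ s, c a ∉ maximalIdeal A := by
    by_contra! h
    refine hx2 (Ideal.sum_mem _ fun a ha ↦ ?_)
    rw [sq]
    exact Ideal.mul_mem_mul (h a ha) (hs ▸ Ideal.subset_span ha)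
  have hu : IsUnit (c a) := by simpa using hc
  refine ⟨a, ha, le_antisymm ?_ ?_⟩
  · rw [Ideal.span_le, Set.insert_subset_iff]
    refine ⟨Ideal.sum_mem _ fun b hb ↦ Ideal.mul_mem_left _ _ (hs ▸ Ideal.subset_span hb), ?_⟩
    intro b hb
    exact hs ▸ Ideal.subset_span (Finset.mem_of_mem_erase hb)
  · rw [← hs, Ideal.span_le]
    intro b hb
    by_cases hba : b = a
    · subst hba
      have hsum : c b • b = ∑ i ∈ s, c i • i - ∑ i ∈ s.erase b, c i • i := by
        rw [← Finset.add_sum_erase s _ ha]; ring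
      refine (Ideal.unit_mul_mem_iff_mem _ hu).1 ?_
      rw [← smul_eq_mul, hsum]
      refine Ideal.sub_mem _ (Ideal.subset_span (by simp)) (Ideal.sum_mem _ fun i hi ↦
        Ideal.mul_mem_left _ _ (Ideal.subset_span (Or.inr hi)))
    · exact Ideal.subset_span (Or.inr (Finset.mem_erase.2 ⟨hba, hb⟩))

lemma isDomain_of_isDomain_quotient {A : Type u} [CommRing A] [IsNoetherianRing A]
    [IsLocalRing A] (x : A) (hx : x ∈ maximalIdeal A) (hmin : ∀ P ∈ minimalPrimes A, x ∉ P)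
    [IsDomain (A ⧸ Ideal.span {x})] : IsDomain A := by
  have hprime : (Ideal.span {x}).IsPrime := (Ideal.Quotient.isDomain_iff_prime _).1 inferInstance
  obtain ⟨P, hP, hPx⟩ := Ideal.exists_minimalPrimes_le (bot_le : ⊥ ≤ Ideal.span {x})
  have hPp := Ideal.IsMinimalPrime.isPrime hP
  have hbot : P = ⊥ :=
    Submodule.eq_bot_of_le_smul_of_le_jacobson_bot (maximalIdeal A) P
      (IsNoetherian.noetherian _) (fun p hp ↦ by
        obtain ⟨y, rfl⟩ := Ideal.mem_span_singleton'.1 (hPx hp)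
        have hy : y ∈ P := (hPp.mem_or_mem hp).resolve_right (hmin P hP)
        rw [mul_comm]
        exact Submodule.smul_mem_smul hx hy)
      (IsLocalRing.maximalIdeal_le_jacobson _)
  subst hbot
  exact IsDomain.of_bot_isPrime A

theorem exists_isWeaklyRegular_of_card_le (d : ℕ) : ∀ (A : Type u) [CommRing A]
    [IsNoetherianRing A] [IsLocalRing A], ringKrullDim A = d →
    (∃ s : Finset A, s.card ≤ d ∧ Ideal.span (s : Set A) = maximalIdeal A) →
    IsDomain A ∧ ∃ rs : List A, rs.length = d ∧ IsWeaklyRegular A rs ∧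
      Ideal.ofList rs = maximalIdeal A := by
  classical
  induction d with
  | zero =>
    rintro A _ _ _ - ⟨s, hs, hspan⟩
    obtain rfl : s = ∅ := by simpa using hs
    have hm : maximalIdeal A = ⊥ := by rw [← hspan]; simp
    have : IsField A := IsLocalRing.isField_iff_maximalIdeal_eq.2 hm
    exact ⟨this.isDomain, [], rfl, IsWeaklyRegular.nil A A, by simp [hm]⟩
  | succ d ih =>
    rintro A _ _ _ hdim ⟨s, hs, hspan⟩
    obtain ⟨x, hx, hx2, hxmin⟩ := exists_notMem_sq_notMem_minimalPrimes A (by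
      rw [hdim]; exact_mod_cast d.succ_ne_zero)
    obtain ⟨a, ha, hspan'⟩ := exists_span_insert_erase_eq s hspan x hx hx2
    have hne : Ideal.span {x} ≠ ⊤ := fun h ↦
      (maximalIdeal.isMaximal A).ne_top (top_le_iff.1 (h ▸ (Ideal.span_singleton_le_iff_mem _).2 hx))
    have := Ideal.Quotient.nontrivial_iff.2 hne
    let B := A ⧸ Ideal.span {x}
    let f : A →+* B := Ideal.Quotient.mk _
    have hf : Function.Surjective f := Ideal.Quotient.mk_surjective
    have : IsLocalRing B := IsLocalRing.of_surjective' f hf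
    have hmax : (maximalIdeal A).map f = maximalIdeal B :=
      IsLocalRing.map_maximalIdeal_of_surjective f hf
    have hspanB : Ideal.span (((s.erase a).image f : Finset B) : Set B) = maximalIdeal B := by
      rw [← hmax, ← hspan', Ideal.map_span, Set.image_insert_eq]
      have : f x = 0 := Ideal.Quotient.eq_zero_iff_mem.2 (Ideal.mem_span_singleton_self x)
      simp [this]
    have hcard : ((s.erase a).image f).card ≤ d := by
      refine Finset.card_image_le.trans ?_
      rw [Finset.card_erase_of_mem ha]
      omega
    have hdimB : ringKrullDim B = d := by
      refine le_antisymm ?_ ?_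
      · refine (ringKrullDim_le_spanFinrank_maximalIdeal B).trans ?_
        rw [← hspanB]
        refine Nat.cast_le.2 ((Submodule.spanFinrank_span_le_ncard_of_finite
          (Finset.finite_toSet _)).trans ?_)
        rwa [Set.ncard_coe_finset]
      · have h := ringKrullDim_le_ringKrullDim_quotient_add_encard {x}
          (by rw [IsLocalRing.ringJacobson_eq_maximalIdeal, Set.singleton_subset_iff]; exact hx)
        rw [hdim] at h
        have h' : ((d + 1 : ℕ) : WithBot ℕ∞) ≤ ringKrullDim B + 1 := by simpa using h
        rw [Nat.cast_succ] at h'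
        exact ENat.WithBot.add_le_add_one_right_iff.1 h'
    obtain ⟨hdom, rs', hlen, hreg, hof⟩ := ih B hdimB ⟨_, hcard, hspanB⟩
    have hdomA : IsDomain A := isDomain_of_isDomain_quotient x hx hxmin
    obtain ⟨rs, rfl⟩ := List.map_surjective_iff.2 hf rs'
    have hx0 : x ≠ 0 := fun h ↦ hx2 (h ▸ zero_mem _)
    refine ⟨hdomA, x :: rs, by simpa using hlen, ?_, ?_⟩
    · rw [isWeaklyRegular_cons_iff]
      refine ⟨IsSMulRegular.of_ne_zero hx0, ?_⟩
      have e : QuotSMulTop x A ≃ₗ[A] B := Submodule.quotEquivOfEq _ _ (by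
        rw [← Submodule.ideal_span_singleton_smul]; simp)
      rw [e.isWeaklyRegular_congr]
      exact (isWeaklyRegular_map_algebraMap_iff B B rs).1 hreg
    · rw [Ideal.ofList_cons]
      have h1 : (Ideal.ofList rs).map f = (maximalIdeal A).map f := by
        rw [Ideal.map_ofList, hof, hmax]
      have h2 := congrArg (Ideal.comap f) h1
      rw [Ideal.comap_map_of_surjective f hf, Ideal.comap_map_of_surjective f hf] at h2
      have hker : Ideal.comap f ⊥ = Ideal.span {x} := Ideal.mk_ker
      rw [hker] at h2
      rw [sup_comm, h2, sup_eq_left]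
      exact (Ideal.span_singleton_le_iff_mem _).2 hx

end RegularSequence

section Vanishing
open RingTheory.Sequence Abelian

variable {A : Type u} [CommRing A]

lemma subsingleton_ext_residueField_of_isWeaklyRegular [IsLocalRing A] (rs : List A)
    (hrs : ∀ r ∈ rs, r ∈ maximalIdeal A) : ∀ (M : ModuleCat.{u} A), IsWeaklyRegular M rs →
    ∀ i < rs.length, Subsingleton (Ext (ModuleCat.of A (A ⧸ maximalIdeal A)) M i) := by
  induction rs with
  | nil => simp
  | cons x rs ih =>
    intro M hM i hi
    rw [isWeaklyRegular_cons_iff] at hM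
    have hse := hM.1.smulShortComplex_shortExact
    refine subsingleton_of_forall_eq 0 fun e ↦ ?_
    have hz : x • (𝟙 (ModuleCat.of A (A ⧸ maximalIdeal A))) = 0 := by
      refine ModuleCat.hom_ext (LinearMap.ext fun a ↦ ?_)
      obtain ⟨a, rfl⟩ := Submodule.Quotient.mk_surjective _ a
      exact (Submodule.Quotient.mk_eq_zero _).2
        (Ideal.mul_mem_right _ _ (hrs x List.mem_cons_self))
    have he : e.comp (Ext.mk₀ (x • 𝟙 M)) (add_zero i) = 0 := by
      have h1 : (Ext.mk₀ (x • 𝟙 (ModuleCat.of A (A ⧸ maximalIdeal A)))).comp e (zero_add i) =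
          x • e := by
        rw [Ext.mk₀_smul, Ext.smul_comp, Ext.mk₀_id_comp]
      rw [Ext.mk₀_smul, Ext.comp_smul]
      refine (congrArg (x • ·) (Ext.comp_mk₀_id e)).trans (h1.symm.trans ?_)
      rw [hz, Ext.mk₀_zero, Ext.zero_comp]
    cases i with
    | zero =>
      have : Mono (x • 𝟙 M) := hse.mono_f
      exact Ext.postcomp_mk₀_injective_of_mono _ (x • 𝟙 M)
        (he.trans (Ext.zero_comp (h := add_zero 0) ..).symm)
    | succ i =>
      obtain ⟨y, rfl⟩ := Ext.covariant_sequence_exact₁ _ hse e he rfl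
      have := ih (fun r hr ↦ hrs r (List.mem_cons_of_mem _ hr))
        (ModuleCat.smulShortComplex M x).X₃ hM.2 i (by simpa using hi)
      rw [Subsingleton.elim y 0, Ext.zero_comp]
      rfl

lemma subsingleton_ext_residueField_of_length_lt [IsLocalRing A] [IsNoetherianRing A]
    (rs : List A) (hrs : Ideal.ofList rs = maximalIdeal A) (hreg : IsWeaklyRegular A rs)
    (Y : ModuleCat.{u} A) (i : ℕ) (hi : rs.length < i) :
    Subsingleton (Ext (ModuleCat.of A (A ⧸ maximalIdeal A)) Y i) := by
  have h := ModuleCat.projectiveDimension_quotient_eq_add_length_of_isWeaklyRegular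
    (ModuleCat.of A A) rs hreg (fun r hr ↦ hrs ▸ Ideal.subset_span hr)
  have h2 : HasProjectiveDimensionLT (ModuleCat.of A (A ⧸ maximalIdeal A)) (rs.length + 1) := by
    let e : (ModuleCat.of A (A ⧸ Ideal.ofList rs • (⊤ : Submodule A A))) ≅
        (ModuleCat.of A (A ⧸ maximalIdeal A)) :=
      (Submodule.quotEquivOfEq _ _ (by rw [hrs]; simp)).toModuleIso
    refine (projectiveDimension_le_iff _ _).1 ?_
    rw [← projectiveDimension_eq_of_iso e, h]
    have : projectiveDimension (ModuleCat.of A A) ≤ (0 : ℕ) := by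
      rw [projectiveDimension_le_iff]
      exact inferInstance
    calc _ ≤ ((0 : ℕ) : WithBot ℕ∞) + rs.length := by gcongr
      _ = _ := by simp
  exact HasProjectiveDimensionLT.subsingleton _ (rs.length + 1) i (by omega) Y

lemma subsingleton_ext_of_subsingleton_ext_residueField [IsLocalRing A] [IsNoetherianRing A]
    (Y : ModuleCat.{u} A) (i : ℕ)
    (h : Subsingleton (Ext (ModuleCat.of A (A ⧸ maximalIdeal A)) Y i))
    (N : Type u) [AddCommGroup N] [Module A N] [Module.Finite A N] (t : ℕ)
    (ht : maximalIdeal A ^ t ≤ Module.annihilator A N) :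
    Subsingleton (Ext (ModuleCat.of A N) Y i) := by
  revert ht
  induction ‹Module.Finite A N› using
    IsNoetherianRing.induction_on_isQuotientEquivQuotientPrime A with
  | subsingleton N =>
    intro _
    have h0 : Limits.IsZero (ModuleCat.of A N) := ModuleCat.isZero_of_subsingleton _
    refine subsingleton_of_forall_eq 0 fun e ↦ ?_
    rw [← Ext.mk₀_id_comp e, h0.eq_of_src (𝟙 _) 0, Ext.mk₀_zero, Ext.zero_comp]
  | quotient N p f =>
    intro ht
    have hle : maximalIdeal A ^ t ≤ p.asIdeal := by
      rwa [f.annihilator_eq, Ideal.annihilator_quotient] at ht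
    have hp : p.asIdeal = maximalIdeal A :=
      le_antisymm (le_maximalIdeal p.2.ne_top) (p.2.le_of_pow_le hle)
    let e : ModuleCat.of A (A ⧸ maximalIdeal A) ≅ ModuleCat.of A N :=
      (f.trans (Submodule.quotEquivOfEq _ _ hp)).symm.toModuleIso
    refine subsingleton_of_forall_eq 0 fun x ↦ ?_
    rw [← Ext.mk₀_id_comp x, ← e.inv_hom_id, ← Ext.mk₀_comp_mk₀_assoc,
      Subsingleton.elim ((Ext.mk₀ e.hom).comp x _) 0, Ext.comp_zero]
  | exact N₁ N₂ N₃ f g hf hg hfg h₁ h₃ =>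
    intro ht
    have i₁ := h₁ (ht.trans (f.annihilator_le_of_injective hf))
    have i₃ := h₃ (ht.trans (g.annihilator_le_of_surjective hg))
    have hS := ModuleCat.shortExact_ofHom hf hg hfg
    refine subsingleton_of_forall_eq 0 fun x ↦ ?_
    obtain ⟨y, rfl⟩ := Ext.contravariant_sequence_exact₂ hS Y x
      (@Subsingleton.elim _ i₁ _ _)
    rw [@Subsingleton.elim _ i₃ y 0, Ext.comp_zero]

end Vanishing

namespace LocCoh
open Abelian

variable {A : Type u} [CommRing A] (I : Ideal A)

/-- The maps to local cohomology from the terms of the direct system computing it. -/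
noncomputable def of (p : ℕ) (M : ModuleCat.{u} A) (t : ℕ) : ExtPowQuot I M p t →ₗ[A] LocCoh I p M :=
  Module.DirectLimit.of A ℕ (ExtPowQuot I M p) (extPowQuotMap I M p) t

lemma of_extPowQuotMap (p : ℕ) (M : ModuleCat.{u} A) {s t : ℕ} (h : s ≤ t)
    (x : ExtPowQuot I M p s) : of I p M t (extPowQuotMap I M p s t h x) = of I p M s x :=
  Module.DirectLimit.of_f

lemma of_comp (p : ℕ) (M : ModuleCat.{u} A) {s t : ℕ} (h : s ≤ t) (x : ExtPowQuot I M p s) :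
    of I p M t ((Ext.mk₀ (powQuotMap I h)).comp x (zero_add p)) = of I p M s x :=
  of_extPowQuotMap I p M h x

variable {I}

lemma exists_of {p : ℕ} {M : ModuleCat.{u} A} (z : LocCoh I p M) : ∃ t x, of I p M t x = z :=
  Module.DirectLimit.exists_of z

lemma exists_of_eq_zero {p : ℕ} {M : ModuleCat.{u} A} {t : ℕ} {x : ExtPowQuot I M p t}
    (h : of I p M t x = 0) :
    ∃ s, ∃ h : t ≤ s, (Ext.mk₀ (powQuotMap I h)).comp x (zero_add p) = 0 :=
  Module.DirectLimit.of.zero_exact h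

lemma subsingleton {p : ℕ} {M : ModuleCat.{u} A} (h : ∀ t, Subsingleton (ExtPowQuot I M p t)) :
    Subsingleton (LocCoh I p M) := by
  refine subsingleton_of_forall_eq 0 fun z ↦ ?_
  obtain ⟨t, x, rfl⟩ := exists_of z
  rw [@Subsingleton.elim _ (h t) x 0, map_zero]

lemma linearMap_ext {p : ℕ} {M : ModuleCat.{u} A} {N : Type*} [AddCommGroup N] [Module A N]
    {f g : LocCoh I p M →ₗ[A] N} (h : ∀ t x, f (of I p M t x) = g (of I p M t x)) : f = g :=
  Module.DirectLimit.hom_ext fun t ↦ LinearMap.ext (h t)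

variable (I)

/-- The action of an extension class on local cohomology. -/
noncomputable def postAux {M N : ModuleCat.{u} A} {p q r : ℕ} (h : p + q = r) (e : Ext M N q) :
    LocCoh I p M →ₗ[A] LocCoh I r N :=
  Module.DirectLimit.lift A ℕ (ExtPowQuot I M p) (extPowQuotMap I M p)
    (fun t ↦ (of I r N t).comp (e.postcompOfLinear A (powQuot I t) h)) (by
      intro s t hst x
      have h1 : ((Ext.mk₀ (powQuotMap I hst)).comp x (zero_add p)).comp e h =
          (Ext.mk₀ (powQuotMap I hst)).comp (x.comp e h) (zero_add r) :=
        Ext.comp_assoc _ _ _ _ _ (by lia)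
      exact (congrArg (of I r N t) h1).trans (of_comp I r N hst (x.comp e h)))

lemma postAux_of {M N : ModuleCat.{u} A} {p q r : ℕ} (h : p + q = r) (e : Ext M N q)
    (t : ℕ) (x : ExtPowQuot I M p t) :
    postAux I h e (of I p M t x) = of I r N t (x.comp e h) :=
  Module.DirectLimit.lift_of _ _ x

/-- The action of extension classes on local cohomology. -/
noncomputable def post {p q r : ℕ} (h : p + q = r) (M N : ModuleCat.{u} A) :
    Ext M N q →ₗ[A] LocCoh I p M →ₗ[A] LocCoh I r N where
  toFun := postAux I h
  map_add' e e' := linearMap_ext fun t x ↦ by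
    rw [LinearMap.add_apply, postAux_of, postAux_of, postAux_of, Ext.comp_add, map_add]
  map_smul' a e := linearMap_ext fun t x ↦ by
    rw [LinearMap.smul_apply, postAux_of, postAux_of, Ext.comp_smul, map_smul]
    rfl

variable {I}

lemma post_of {p q r : ℕ} (h : p + q = r) {M N : ModuleCat.{u} A} (e : Ext M N q)
    (t : ℕ) (x : ExtPowQuot I M p t) :
    post I h M N e (of I p M t x) = of I r N t (x.comp e h) :=
  postAux_of I h e t x

lemma post_comp {p q r q' r' : ℕ} (h : p + q = r) (h' : r + q' = r') {q'' : ℕ}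
    (hq : q + q' = q'') {M N P : ModuleCat.{u} A} (e : Ext M N q) (e' : Ext N P q')
    (z : LocCoh I p M) :
    post I (show p + q'' = r' by lia) M P (e.comp e' hq) z =
      post I h' N P e' (post I h M N e z) := by
  obtain ⟨t, x, rfl⟩ := exists_of z
  rw [post_of, post_of, post_of, Ext.comp_assoc _ _ _ h hq (by lia)]

variable (I) in
/-- Functoriality of local cohomology. -/
noncomputable abbrev map (p : ℕ) {M N : ModuleCat.{u} A} (f : M ⟶ N) :
    LocCoh I p M →ₗ[A] LocCoh I p N :=
  post I (add_zero p) M N (Ext.mk₀ f)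

lemma map_comp {p : ℕ} {M N P : ModuleCat.{u} A} (f : M ⟶ N) (g : N ⟶ P) (z : LocCoh I p M) :
    map I p (f ≫ g) z = map I p g (map I p f z) := by
  rw [← post_comp (add_zero p) (add_zero p) (add_zero 0), Ext.mk₀_comp_mk₀]

lemma map_id {p : ℕ} {M : ModuleCat.{u} A} (z : LocCoh I p M) : map I p (𝟙 M) z = z := by
  obtain ⟨t, x, rfl⟩ := exists_of z
  rw [post_of, Ext.comp_mk₀_id]

lemma map_zero {p : ℕ} {M N : ModuleCat.{u} A} (z : LocCoh I p M) :
    map I p (0 : M ⟶ N) z = 0 := by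
  obtain ⟨t, x, rfl⟩ := exists_of z
  rw [post_of, Ext.mk₀_zero, Ext.comp_zero, _root_.map_zero]

variable {S : ShortComplex (ModuleCat.{u} A)} (hS : S.ShortExact)
include hS

lemma exists_map_eq_of_post_extClass_eq_zero {p r : ℕ} (h : p + 1 = r) (z : LocCoh I p S.X₃)
    (hz : post I h S.X₃ S.X₁ hS.extClass z = 0) : ∃ y, map I p S.g y = z := by
  obtain ⟨t, x, rfl⟩ := exists_of z
  rw [post_of] at hz
  obtain ⟨s, hs, hx⟩ := exists_of_eq_zero hz
  obtain ⟨y, hy⟩ := Ext.covariant_sequence_exact₃ _ hS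
    ((Ext.mk₀ (powQuotMap I hs)).comp x (zero_add p)) h (by
      rw [← hx]; exact Ext.comp_assoc _ _ _ _ _ (by lia))
  exact ⟨of I p S.X₂ s y, by rw [post_of, hy, of_comp]⟩

lemma exists_post_extClass_eq_of_map_eq_zero {p r : ℕ} (h : p + 1 = r) (z : LocCoh I r S.X₁)
    (hz : map I r S.f z = 0) : ∃ y, post I h S.X₃ S.X₁ hS.extClass y = z := by
  obtain ⟨t, x, rfl⟩ := exists_of z
  rw [post_of] at hz
  obtain ⟨s, hs, hx⟩ := exists_of_eq_zero hz
  obtain ⟨y, hy⟩ := Ext.covariant_sequence_exact₁ _ hS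
    ((Ext.mk₀ (powQuotMap I hs)).comp x (zero_add r)) (by
      rw [← hx]; exact Ext.comp_assoc _ _ _ _ _ (by lia)) h
  exact ⟨of I p S.X₃ s y, by rw [post_of, hy, of_comp]⟩

end LocCoh

section Injective

variable {A : Type u} [CommRing A]

lemma LinearMap.exists_comp_eq_of_surjective {M N P : Type*} [AddCommGroup M] [Module A M]
    [AddCommGroup N] [Module A N] [AddCommGroup P] [Module A P] (f : M →ₗ[A] N)
    (hf : Function.Surjective f) (g : M →ₗ[A] P) (hg : LinearMap.ker f ≤ LinearMap.ker g) :
    ∃ h : N →ₗ[A] P, h ∘ₗ f = g := by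
  refine ⟨(LinearMap.ker f).liftQ g hg ∘ₗ (f.quotKerEquivOfSurjective hf).symm.toLinearMap, ?_⟩
  ext x
  have : (f.quotKerEquivOfSurjective hf).symm (f x) = Submodule.Quotient.mk x := by
    rw [LinearEquiv.symm_apply_eq]
    rfl
  exact congrArg _ this

lemma Module.Baer.exists_comp_eq {M N P : Type u} [AddCommGroup M] [Module A M]
    [AddCommGroup N] [Module A N] [AddCommGroup P] [Module A P] (hP : Module.Baer A P)
    (f : M →ₗ[A] N) (g : M →ₗ[A] P) (hg : LinearMap.ker f ≤ LinearMap.ker g) :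
    ∃ h : N →ₗ[A] P, h ∘ₗ f = g := by
  obtain ⟨h, hh⟩ := LinearMap.exists_comp_eq_of_surjective f.rangeRestrict
    f.surjective_rangeRestrict g (by simpa using hg)
  obtain ⟨k, hk⟩ := hP.extension_property (LinearMap.range f).subtype Subtype.val_injective h
  refine ⟨k, ?_⟩
  rw [← hh, ← hk]
  rfl

namespace LocCoh
open CategoryTheory.Abelian

variable (I : Ideal A) (N : Type u) [AddCommGroup N] [Module A N] (t : ℕ)
  (ht : I ^ t ≤ Module.annihilator A N)

/-- The morphism from `A ⧸ I ^ t` given by an element of a module annihilated by `I ^ t`. -/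
noncomputable def point : N →ₗ[A] (powQuot I t ⟶ ModuleCat.of A N) where
  toFun n := ModuleCat.ofHom ((I ^ t).liftQ (LinearMap.toSpanSingleton A N n) fun _ ha ↦
    Module.mem_annihilator.1 (ht ha) n)
  map_add' n n' := ModuleCat.hom_ext (Submodule.linearMap_qext _ (LinearMap.ext fun a ↦
    smul_add a n n'))
  map_smul' b n := ModuleCat.hom_ext (Submodule.linearMap_qext _ (LinearMap.ext fun a ↦
    smul_comm a b n))

variable {N t ht} in
lemma eq_point (n : N) (f : powQuot I t ⟶ ModuleCat.of A N)
    (hf : f.hom (Submodule.Quotient.mk 1) = n) : f = point I N t ht n :=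
  ModuleCat.hom_ext (Submodule.linearMap_qext _ (LinearMap.ext_ring
    (hf.trans (one_smul A n).symm)))

/-- An extension class of `N` gives a map from `N` to local cohomology. -/
noncomputable def ofExt (Y : ModuleCat.{u} A) (p : ℕ) :
    Ext (ModuleCat.of A N) Y p →ₗ[A] N →ₗ[A] LocCoh I p Y :=
  LinearMap.mk₂ A (fun ξ n ↦ of I p Y t ((Ext.mk₀ (point I N t ht n)).comp ξ (zero_add p)))
    (fun ξ ξ' n ↦ by rw [Ext.comp_add, _root_.map_add])
    (fun a ξ n ↦ by rw [Ext.comp_smul, _root_.map_smul])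
    (fun ξ n n' ↦ by rw [_root_.map_add, Ext.mk₀_add, Ext.add_comp, _root_.map_add])
    (fun a ξ n ↦ by rw [_root_.map_smul, Ext.mk₀_smul, Ext.smul_comp, _root_.map_smul])

variable {N t ht} {Y : ModuleCat.{u} A} {p : ℕ}

lemma ofExt_apply (ξ : Ext (ModuleCat.of A N) Y p) (n : N) :
    ofExt I N t ht Y p ξ n = of I p Y t ((Ext.mk₀ (point I N t ht n)).comp ξ (zero_add p)) := rfl

lemma ofExt_of_le {s : ℕ} (hs : t ≤ s) (ξ : Ext (ModuleCat.of A N) Y p) :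
    ofExt I N s ((Ideal.pow_le_pow_right hs).trans ht) Y p ξ = ofExt I N t ht Y p ξ := by
  ext n
  have h : powQuotMap I hs ≫ point I N t ht n =
      point I N s ((Ideal.pow_le_pow_right hs).trans ht) n :=
    eq_point I n _ (one_smul A n)
  rw [ofExt_apply, ofExt_apply, ← h, ← of_comp I p Y hs, ← Ext.mk₀_comp_mk₀_assoc]

lemma ofExt_comp {N' : Type u} [AddCommGroup N'] [Module A N']
    {ht' : I ^ t ≤ Module.annihilator A N'} (f : N' →ₗ[A] N)
    (ξ : Ext (ModuleCat.of A N) Y p) :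
    ofExt I N' t ht' Y p ((Ext.mk₀ (ModuleCat.ofHom f)).comp ξ (zero_add p)) =
      ofExt I N t ht Y p ξ ∘ₗ f := by
  ext n
  have h : point I N' t ht' n ≫ ModuleCat.ofHom f = point I N t ht (f n) :=
    eq_point I (f n) _ (congrArg f (one_smul A n))
  rw [ofExt_apply, LinearMap.comp_apply, ofExt_apply, ← h, ← Ext.mk₀_comp_mk₀_assoc]

lemma smul_of_eq_zero {a : A} (ha : a ∈ I ^ t) (x : ExtPowQuot I Y p t) : a • x = 0 := by
  have hz : a • (𝟙 (powQuot I t)) = 0 :=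
    ModuleCat.hom_ext (Submodule.linearMap_qext _ (LinearMap.ext fun b ↦
      (Submodule.Quotient.mk_eq_zero _).2 (Ideal.mul_mem_right _ _ ha)))
  rw [← Ext.mk₀_id_comp x, ← Ext.smul_comp, ← Ext.mk₀_smul, hz, Ext.mk₀_zero, Ext.zero_comp]

lemma exists_pow_smul_eq_zero (P : Submodule A (LocCoh I p Y)) (hP : P.FG) :
    ∃ t, ∀ a ∈ I ^ t, ∀ y ∈ P, a • y = 0 := by
  induction P, hP using Submodule.fg_induction with
  | singleton y =>
    obtain ⟨t, x, rfl⟩ := exists_of y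
    refine ⟨t, fun a ha y hy ↦ ?_⟩
    obtain ⟨b, rfl⟩ := Submodule.mem_span_singleton.1 hy
    rw [smul_comm, ← _root_.map_smul, smul_of_eq_zero I ha, _root_.map_zero, smul_zero]
  | sup P Q hP hQ h1 h2 =>
    obtain ⟨t, ht⟩ := h1
    obtain ⟨s, hs⟩ := h2
    refine ⟨max t s, fun a ha y hy ↦ ?_⟩
    obtain ⟨y, hyP, z, hz, rfl⟩ := Submodule.mem_sup.1 hy
    rw [smul_add, ht a (Ideal.pow_le_pow_right (le_max_left t s) ha) y hyP,
      hs a (Ideal.pow_le_pow_right (le_max_right t s) ha) z hz, add_zero]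

end LocCoh
end Injective

namespace LocCoh
open CategoryTheory.Abelian

lemma _root_.Ideal.pow_le_annihilator_quotient {A : Type u} [CommRing A] (I : Ideal A) (t : ℕ) :
    I ^ t ≤ Module.annihilator A (A ⧸ I ^ t) := Ideal.annihilator_quotient.ge

section Baer

variable {A : Type u} [CommRing A] [IsLocalRing A] [IsNoetherianRing A]
  {Y : ModuleCat.{u} A} {d : ℕ}
  (hlt : ∀ i < d, Subsingleton (Ext (ModuleCat.of A (A ⧸ maximalIdeal A)) Y i))
  (hgt : Subsingleton (Ext (ModuleCat.of A (A ⧸ maximalIdeal A)) Y (d + 1)))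

include hlt in
lemma eq_zero_of_precomp_eq_zero {N N' : Type u} [AddCommGroup N] [Module A N]
    [Module.Finite A N] [AddCommGroup N'] [Module A N'] {t : ℕ}
    (ht : maximalIdeal A ^ t ≤ Module.annihilator A N) (g : N →ₗ[A] N')
    (hg : Function.Surjective g) (ξ : Ext (ModuleCat.of A N') Y d)
    (hξ : (Ext.mk₀ (ModuleCat.ofHom g)).comp ξ (zero_add d) = 0) : ξ = 0 := by
  cases d with
  | zero =>
    have : Epi (ModuleCat.ofHom g) := (ModuleCat.epi_iff_surjective _).2 hg
    exact Ext.precomp_mk₀_injective_of_epi Y (ModuleCat.ofHom g)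
      (hξ.trans (Ext.comp_zero (h := zero_add 0) ..).symm)
  | succ d =>
    have hS := ModuleCat.shortExact_ofHom Subtype.val_injective hg g.exact_subtype_ker_map
    obtain ⟨η, rfl⟩ := Ext.contravariant_sequence_exact₃ hS Y ξ hξ (add_comm 1 d)
    have := subsingleton_ext_of_subsingleton_ext_residueField Y d (hlt d (by lia))
      (LinearMap.ker g) t (ht.trans
        ((LinearMap.ker g).subtype.annihilator_le_of_injective Subtype.val_injective))
    exact (congrArg (hS.extClass.comp · (add_comm 1 d)) (Subsingleton.elim η 0)).trans
      (Ext.comp_zero ..)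

include hgt in
lemma exists_precomp_eq {N N' : Type u} [AddCommGroup N] [Module A N]
    [Module.Finite A N] [AddCommGroup N'] [Module A N'] {t : ℕ}
    (ht : maximalIdeal A ^ t ≤ Module.annihilator A N) (f : N' →ₗ[A] N)
    (hf : Function.Injective f) (ξ : Ext (ModuleCat.of A N') Y d) :
    ∃ η : Ext (ModuleCat.of A N) Y d,
      (Ext.mk₀ (ModuleCat.ofHom f)).comp η (zero_add d) = ξ := by
  have hS := ModuleCat.shortExact_ofHom hf (Submodule.mkQ_surjective _) f.exact_map_mkQ_range
  have := subsingleton_ext_of_subsingleton_ext_residueField Y (d + 1) hgt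
    (N ⧸ LinearMap.range f) t (ht.trans
      ((LinearMap.range f).mkQ.annihilator_le_of_surjective (Submodule.mkQ_surjective _)))
  exact Ext.contravariant_sequence_exact₁ hS Y ξ (add_comm 1 d) (Subsingleton.elim _ _)

include hlt in
lemma of_eq_zero {t : ℕ} (x : ExtPowQuot (maximalIdeal A) Y d t)
    (hx : of (maximalIdeal A) d Y t x = 0) : x = 0 := by
  obtain ⟨s, hs, h⟩ := exists_of_eq_zero hx
  exact eq_zero_of_precomp_eq_zero hlt (Ideal.pow_le_annihilator_quotient _ s) _
    (fun y ↦ by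
      obtain ⟨a, rfl⟩ := Submodule.Quotient.mk_surjective _ y
      exact ⟨Submodule.Quotient.mk a, rfl⟩) x h

omit [IsLocalRing A] [IsNoetherianRing A] in
lemma exists_smul_of_quotient_equiv {N : Type u} [AddCommGroup N] [Module A N] {J : Ideal A}
    (f : N ≃ₗ[A] A ⧸ J) (n : N) : ∃ a : A, a • f.symm 1 = n := by
  obtain ⟨a, ha⟩ := Ideal.Quotient.mk_surjective (f n)
  refine ⟨a, ?_⟩
  rw [← map_smul, LinearEquiv.symm_apply_eq, ← ha, Algebra.smul_def, mul_one]
  rfl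

omit [IsLocalRing A] [IsNoetherianRing A] in
lemma ofExt_powQuot (I : Ideal A) (t : ℕ) (x : ExtPowQuot I Y d t) (a : A) :
    ofExt I (A ⧸ I ^ t) t (I.pow_le_annihilator_quotient t) Y d x (Submodule.Quotient.mk a) =
      a • of I d Y t x := by
  have h : point I (A ⧸ I ^ t) t (I.pow_le_annihilator_quotient t) (Submodule.Quotient.mk a) =
      a • 𝟙 (powQuot I t) :=
    (eq_point I (Submodule.Quotient.mk a) (a • 𝟙 (powQuot I t))
      (congrArg Submodule.Quotient.mk (mul_one a))).symm
  rw [ofExt_apply, h, Ext.mk₀_smul, Ext.smul_comp, Ext.mk₀_id_comp, _root_.map_smul]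

include hlt in
lemma ofExt_eq_zero (N : Type u) [AddCommGroup N] [Module A N] [Module.Finite A N] (t : ℕ)
    (ht : maximalIdeal A ^ t ≤ Module.annihilator A N) (ξ : Ext (ModuleCat.of A N) Y d)
    (hξ : ofExt (maximalIdeal A) N t ht Y d ξ = 0) : ξ = 0 := by
  revert ht ξ
  induction ‹Module.Finite A N› using
    IsNoetherianRing.induction_on_isQuotientEquivQuotientPrime A with
  | subsingleton N =>
    intro ht ξ _
    have h0 : Limits.IsZero (ModuleCat.of A N) := ModuleCat.isZero_of_subsingleton _
    rw [← Ext.mk₀_id_comp ξ, h0.eq_of_src (𝟙 _) 0, Ext.mk₀_zero, Ext.zero_comp]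
  | quotient N p f =>
    intro ht ξ h
    refine eq_zero_of_precomp_eq_zero hlt (Ideal.pow_le_annihilator_quotient _ t)
      (point _ N t ht (f.symm 1)).hom (fun n ↦ ?_) ξ (of_eq_zero hlt _ (LinearMap.congr_fun h _))
    obtain ⟨a, rfl⟩ := exists_smul_of_quotient_equiv f n
    exact ⟨Submodule.Quotient.mk a, rfl⟩
  | exact N₁ N₂ N₃ f g hf hg hfg h₁ h₃ =>
    intro ht ξ h
    have ht₁ := ht.trans (f.annihilator_le_of_injective hf)
    have ht₃ := ht.trans (g.annihilator_le_of_surjective hg)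
    have hS := ModuleCat.shortExact_ofHom hf hg hfg
    obtain ⟨η, rfl⟩ := Ext.contravariant_sequence_exact₂ hS Y ξ
      (h₁ ht₁ _ (by rw [ofExt_comp (ht := ht), h, LinearMap.zero_comp]))
    have h' : ofExt (maximalIdeal A) N₃ t ht₃ Y d η ∘ₗ g = 0 :=
      (ofExt_comp (ht' := ht) _ g η).symm.trans h
    rw [h₃ ht₃ η (LinearMap.cancel_right hg |>.1 (h'.trans (LinearMap.zero_comp _).symm))]
    exact Ext.comp_zero ..

include hlt hgt in
lemma exists_ofExt_eq (N : Type u) [AddCommGroup N] [Module A N] [Module.Finite A N] (t : ℕ)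
    (ht : maximalIdeal A ^ t ≤ Module.annihilator A N)
    (h : N →ₗ[A] LocCoh (maximalIdeal A) d Y) :
    ∃ ξ, ofExt (maximalIdeal A) N t ht Y d ξ = h := by
  revert ht h
  induction ‹Module.Finite A N› using
    IsNoetherianRing.induction_on_isQuotientEquivQuotientPrime A with
  | subsingleton N =>
    intro ht h
    exact ⟨0, Subsingleton.elim _ _⟩
  | quotient N p f =>
    intro ht h
    obtain ⟨s, hs, x, hx⟩ : ∃ s, ∃ _ : t ≤ s, ∃ x,
        of (maximalIdeal A) d Y s x = h (f.symm 1) := by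
      obtain ⟨s, x, hx⟩ := exists_of (h (f.symm 1))
      exact ⟨max s t, le_max_right s t, _,
        (of_extPowQuotMap _ d Y (le_max_left s t) x).trans hx⟩
    have hts := (Ideal.pow_le_pow_right hs).trans ht
    let c := (point (maximalIdeal A) N s hts (f.symm 1)).hom
    have hc : Function.Surjective c := fun n ↦ by
      obtain ⟨a, rfl⟩ := exists_smul_of_quotient_equiv f n
      exact ⟨Submodule.Quotient.mk a, rfl⟩
    have hS := ModuleCat.shortExact_ofHom Subtype.val_injective hc c.exact_subtype_ker_map
    have hQ := (maximalIdeal A).pow_le_annihilator_quotient s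
    have hK := hQ.trans
      ((LinearMap.ker c).subtype.annihilator_le_of_injective Subtype.val_injective)
    obtain ⟨ξ, hξ⟩ := Ext.contravariant_sequence_exact₂ hS Y x (by
      refine ofExt_eq_zero hlt (LinearMap.ker c) s hK _ ?_
      rw [ofExt_comp (ht := hQ)]
      ext ⟨κ, hκ⟩
      obtain ⟨a, rfl⟩ := Submodule.Quotient.mk_surjective _ κ
      refine (ofExt_powQuot _ s x a).trans ?_
      rw [hx, ← _root_.map_smul]
      exact (congrArg h hκ).trans (_root_.map_zero h))
    refine ⟨ξ, LinearMap.ext fun n ↦ ?_⟩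
    obtain ⟨a, rfl⟩ := exists_smul_of_quotient_equiv f n
    rw [_root_.map_smul, _root_.map_smul, ← hx, ← hξ, ← ofExt_of_le _ hs]
    rfl
  | exact N₁ N₂ N₃ f g hf hg hfg h₁ h₃ =>
    intro ht h
    have ht₁ := ht.trans (f.annihilator_le_of_injective hf)
    have ht₃ := ht.trans (g.annihilator_le_of_surjective hg)
    obtain ⟨ξ₁, h₁⟩ := h₁ ht₁ (h ∘ₗ f)
    obtain ⟨ξ, rfl⟩ := exists_precomp_eq hgt ht f hf ξ₁
    obtain ⟨k, hk⟩ := LinearMap.exists_comp_eq_of_surjective g hg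
      (h - ofExt (maximalIdeal A) N₂ t ht Y d ξ) (by
        intro x hx
        obtain ⟨y, rfl⟩ := (hfg x).1 hx
        rw [ofExt_comp (ht := ht)] at h₁
        rw [LinearMap.mem_ker, LinearMap.sub_apply, sub_eq_zero]
        exact (LinearMap.congr_fun h₁ y).symm)
    obtain ⟨ξ₃, rfl⟩ := h₃ ht₃ k
    refine ⟨ξ + (Ext.mk₀ (ModuleCat.ofHom g)).comp ξ₃ (zero_add d), ?_⟩
    rw [_root_.map_add, ofExt_comp (ht := ht₃), hk, add_sub_cancel]

include hlt hgt in
lemma baer : Module.Baer A (LocCoh (maximalIdeal A) d Y) := by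
  intro J f
  obtain ⟨t, ht⟩ := exists_pow_smul_eq_zero (maximalIdeal A) (LinearMap.range f)
    (Module.Finite.iff_fg.1 (Module.Finite.range f))
  obtain ⟨k, hk⟩ := Ideal.exists_pow_inf_eq_pow_smul (maximalIdeal A) J
  have hQ := (maximalIdeal A).pow_le_annihilator_quotient (k + t)
  let g : J →ₗ[A] A ⧸ maximalIdeal A ^ (k + t) := (maximalIdeal A ^ (k + t)).mkQ ∘ₗ J.subtype
  obtain ⟨f', hf'⟩ := LinearMap.exists_comp_eq_of_surjective g.rangeRestrict
    g.surjective_rangeRestrict f (by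
      rw [LinearMap.ker_rangeRestrict]
      rintro ⟨x, hx⟩ hxg
      have hxm : x ∈ maximalIdeal A ^ (k + t) := (Submodule.Quotient.mk_eq_zero _).1 hxg
      have h1 : x ∈ maximalIdeal A ^ t • J := by
        have h2 : x ∈ maximalIdeal A ^ (k + t) • (⊤ : Ideal A) ⊓ J := ⟨by simpa using hxm, hx⟩
        rw [hk (k + t) (Nat.le_add_right k t), Nat.add_sub_cancel_left] at h2
        exact (smul_mono_right (maximalIdeal A ^ t) inf_le_right :
          _ ≤ maximalIdeal A ^ t • J) h2
      have h3 : maximalIdeal A ^ t • J ≤ (LinearMap.ker f).map J.subtype :=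
        Submodule.smul_le.2 fun a ha y hy ↦
          ⟨a • ⟨y, hy⟩, (f.map_smul a ⟨y, hy⟩).trans (ht a ha _ ⟨_, rfl⟩), rfl⟩
      obtain ⟨x', hx', rfl⟩ := h3 h1
      exact hx')
  obtain ⟨ξ', hξ'⟩ := exists_ofExt_eq hlt hgt (LinearMap.range g) (k + t)
    (hQ.trans ((LinearMap.range g).subtype.annihilator_le_of_injective Subtype.val_injective)) f'
  obtain ⟨ξ, rfl⟩ := exists_precomp_eq hgt hQ (LinearMap.range g).subtype
    Subtype.val_injective ξ'
  refine ⟨ofExt (maximalIdeal A) _ (k + t) hQ Y d ξ ∘ₗ (maximalIdeal A ^ (k + t)).mkQ,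
    fun x hx ↦ ?_⟩
  rw [ofExt_comp (ht := hQ)] at hξ'
  rw [← hf', ← hξ']
  rfl

end Baer
end LocCoh

namespace LocCoh
open CategoryTheory.Abelian

section Free
variable {A : Type u} [CommRing A]

lemma sum_proj_comp_single (n : ℕ) :
    ∑ i : Fin n, ModuleCat.ofHom (LinearMap.proj i : (Fin n → A) →ₗ[A] A) ≫
      ModuleCat.ofHom (LinearMap.single A (fun _ ↦ A) i) = 𝟙 (ModuleCat.of A (Fin n → A)) := by
  refine ModuleCat.hom_ext (LinearMap.ext fun x ↦ ?_)
  rw [ModuleCat.hom_sum, LinearMap.sum_apply]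
  exact Finset.univ_sum_single x

lemma subsingleton_ext_free (n : ℕ) (X : ModuleCat.{u} A) (i : ℕ)
    (h : Subsingleton (Ext X (ModuleCat.of A A) i)) :
    Subsingleton (Ext X (ModuleCat.of A (Fin n → A)) i) := by
  refine subsingleton_of_forall_eq 0 fun x ↦ ?_
  rw [← Ext.comp_mk₀_id x, ← sum_proj_comp_single, Ext.mk₀_sum, Ext.comp_sum]
  refine Finset.sum_eq_zero fun j _ ↦ ?_
  rw [← Ext.mk₀_comp_mk₀, ← Ext.comp_assoc _ _ _ (add_zero i) (add_zero 0) (by lia),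
    Subsingleton.elim (x.comp (Ext.mk₀ (ModuleCat.ofHom (LinearMap.proj j))) (add_zero i)) 0,
    Ext.zero_comp]

variable (I : Ideal A)

/-- The pairing between local cohomology and `Ext`. -/
noncomputable def pairing {p q d : ℕ} (h : p + q = d) (Y M : ModuleCat.{u} A) :
    LocCoh I p M →ₗ[A] Ext M Y q →ₗ[A] LocCoh I d Y :=
  (post I h M Y).flip

variable {I} {p q d : ℕ} {Y M N : ModuleCat.{u} A}

lemma pairing_map (h : p + q = d) (f : M ⟶ N) (ξ : LocCoh I p M) (e : Ext N Y q) :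
    pairing I h Y N (map I p f ξ) e =
      pairing I h Y M ξ ((Ext.mk₀ f).comp e (zero_add q)) :=
  (post_comp (add_zero p) h (zero_add q) (Ext.mk₀ f) e ξ).symm

lemma pairing_post {r s : ℕ} (h : p + s = d) (hr : p + 1 = r) (h' : r + q = d) (hs : 1 + q = s)
    (χ : Ext M N 1) (ξ : LocCoh I p M) (e : Ext N Y q) :
    pairing I h' Y N (post I hr M N χ ξ) e = pairing I h Y M ξ (χ.comp e hs) :=
  (post_comp hr h' hs χ e ξ).symm

lemma map_sum {ι : Type*} [Fintype ι] (f : ι → (M ⟶ N)) (ξ : LocCoh I p M) :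
    map I p (∑ i, f i) ξ = ∑ i, map I p (f i) ξ := by
  rw [map, Ext.mk₀_sum, _root_.map_sum, LinearMap.sum_apply]

lemma pairing_free_bijective (n : ℕ) (h : d + 0 = d) :
    Function.Bijective (pairing I h (ModuleCat.of A A) (ModuleCat.of A (Fin n → A))) := by
  refine ⟨(injective_iff_map_eq_zero _).2 fun ξ hξ ↦ ?_, fun f ↦ ?_⟩
  · rw [← map_id ξ, ← sum_proj_comp_single, map_sum]
    refine Finset.sum_eq_zero fun j _ ↦ ?_
    rw [map_comp]
    refine (congrArg _ (LinearMap.congr_fun hξ (Ext.mk₀ _))).trans (_root_.map_zero _)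
  · refine ⟨∑ i, map I d (ModuleCat.ofHom (LinearMap.single A (fun _ ↦ A) i))
      (f (Ext.mk₀ (ModuleCat.ofHom (LinearMap.proj i)))), LinearMap.ext fun e ↦ ?_⟩
    obtain ⟨g, rfl⟩ := (Ext.mk₀_bijective _ _).2 e
    have hg (i : Fin n) : ModuleCat.ofHom (LinearMap.single A (fun _ ↦ A) i) ≫ g =
        g.hom (Pi.single i 1) • 𝟙 (ModuleCat.of A A) :=
      ModuleCat.hom_ext (LinearMap.ext_ring (mul_one _).symm)
    rw [_root_.map_sum, LinearMap.sum_apply]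
    conv_rhs => rw [← Category.id_comp g, ← sum_proj_comp_single, Preadditive.sum_comp,
      Ext.mk₀_sum, _root_.map_sum]
    refine Finset.sum_congr rfl fun i _ ↦ ?_
    rw [pairing_map, Ext.mk₀_comp_mk₀, Category.assoc, hg, Linear.comp_smul, Category.comp_id,
      Ext.mk₀_smul, Ext.mk₀_smul, _root_.map_smul, _root_.map_smul]
    exact congrArg _ (map_id _)

section ShortExact

variable {S : ShortComplex (ModuleCat.{u} A)} (hS : S.ShortExact)
include hS

lemma pairing_injective_of_shortExact_of_baer (hB : Module.Baer A (LocCoh I d Y))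
    (h : d + 0 = d) (h₁ : Function.Surjective (pairing I h Y S.X₁))
    (h₂ : Function.Injective (pairing I h Y S.X₂)) (h₃ : Subsingleton (LocCoh I (d + 1) S.X₁)) :
    Function.Injective (pairing I h Y S.X₃) := by
  refine (injective_iff_map_eq_zero _).2 fun η hη ↦ ?_
  obtain ⟨ξ, rfl⟩ := exists_map_eq_of_post_extClass_eq_zero hS rfl η (Subsingleton.elim _ _)
  obtain ⟨f, hf⟩ := hB.exists_comp_eq
    ((Ext.mk₀ S.f).precompOfLinear A Y (zero_add 0)) (pairing I h Y S.X₂ ξ) (by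
      intro e he
      obtain ⟨e', rfl⟩ := Ext.contravariant_sequence_exact₂ hS _ e he
      exact (pairing_map h S.g ξ e').symm.trans (LinearMap.congr_fun hη e'))
  obtain ⟨κ, rfl⟩ := h₁ f
  have hκ : map I d S.f κ = ξ :=
    h₂ (LinearMap.ext fun e ↦ (pairing_map h S.f κ e).trans (LinearMap.congr_fun hf e))
  rw [← hκ, ← map_comp, S.zero, map_zero]

lemma pairing_surjective_of_shortExact_of_baer (hB : Module.Baer A (LocCoh I d Y))
    (h : d + 0 = d) (h₂ : Function.Surjective (pairing I h Y S.X₂)) :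
    Function.Surjective (pairing I h Y S.X₃) := by
  intro f
  have := hS.epi_g
  obtain ⟨f', hf'⟩ := hB.exists_comp_eq
    ((Ext.mk₀ S.g).precompOfLinear A Y (zero_add 0)) f (by
      rw [LinearMap.ker_eq_bot.2 (Ext.precomp_mk₀_injective_of_epi _ S.g)]
      exact bot_le)
  obtain ⟨ξ, rfl⟩ := h₂ f'
  refine ⟨map I d S.g ξ, LinearMap.ext fun e ↦ ?_⟩
  rw [pairing_map, ← hf']
  rfl

lemma pairing_injective_of_shortExact (h : p + (q + 1) = d) (h' : p + 1 + q = d)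
    (h₁ : Function.Injective (pairing I h' Y S.X₁)) (h₂ : Subsingleton (LocCoh I p S.X₂)) :
    Function.Injective (pairing I h Y S.X₃) := by
  refine (injective_iff_map_eq_zero _).2 fun ξ hξ ↦ ?_
  have hδ : post I (rfl : p + 1 = p + 1) S.X₃ S.X₁ hS.extClass ξ = 0 :=
    (injective_iff_map_eq_zero _).1 h₁ _ (LinearMap.ext fun e ↦
      (pairing_post h rfl h' (add_comm 1 q) hS.extClass ξ e).trans (LinearMap.congr_fun hξ _))
  obtain ⟨y, rfl⟩ := exists_map_eq_of_post_extClass_eq_zero hS rfl ξ hδ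
  rw [Subsingleton.elim y 0, _root_.map_zero]

lemma pairing_surjective_of_shortExact (h : p + (q + 1) = d) (h' : p + 1 + q = d)
    (h₁ : Function.Surjective (pairing I h' Y S.X₁))
    (h₂ : Function.Injective (pairing I h' Y S.X₂)) (h₃ : Subsingleton (Ext S.X₂ Y (q + 1))) :
    Function.Surjective (pairing I h Y S.X₃) := by
  intro f
  obtain ⟨κ, hκ⟩ := h₁ (f ∘ₗ hS.extClass.precompOfLinear A Y (add_comm 1 q))
  have hκ0 : map I (p + 1) S.f κ = 0 := (injective_iff_map_eq_zero _).1 h₂ _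
    (LinearMap.ext fun e ↦ by
      rw [pairing_map, hκ]
      exact (congrArg f (hS.extClass_comp_assoc e (h := add_comm 1 q))).trans (_root_.map_zero f))
  obtain ⟨ξ, rfl⟩ := exists_post_extClass_eq_of_map_eq_zero hS rfl κ hκ0
  refine ⟨ξ, LinearMap.ext fun e ↦ ?_⟩
  obtain ⟨e', rfl⟩ := Ext.contravariant_sequence_exact₃ hS _ e
    (Subsingleton.elim _ _) (add_comm 1 q)
  exact (pairing_post h rfl h' (add_comm 1 q) hS.extClass ξ e').symm.trans
    (LinearMap.congr_fun hκ e')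

end ShortExact

end Free

section Duality

variable {A : Type u} [CommRing A] [IsLocalRing A] [IsNoetherianRing A] {d : ℕ}
  (hlt : ∀ i < d, Subsingleton (Ext (ModuleCat.of A (A ⧸ maximalIdeal A)) (ModuleCat.of A A) i))
  (hgt : ∀ Y, Subsingleton (Ext (ModuleCat.of A (A ⧸ maximalIdeal A)) Y (d + 1)))

lemma subsingleton_of_residueField (Y : ModuleCat.{u} A) (i : ℕ)
    (h : Subsingleton (Ext (ModuleCat.of A (A ⧸ maximalIdeal A)) Y i)) :
    Subsingleton (LocCoh (maximalIdeal A) i Y) :=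
  subsingleton fun t ↦ subsingleton_ext_of_subsingleton_ext_residueField Y i h _ t
    ((maximalIdeal A).pow_le_annihilator_quotient t)

omit [IsLocalRing A] in
lemma exists_shortExact_free (M : ModuleCat.{u} A) [Module.Finite A M] :
    ∃ (n : ℕ) (K : ModuleCat.{u} A) (f : K ⟶ ModuleCat.of A (Fin n → A))
      (g : ModuleCat.of A (Fin n → A) ⟶ M) (w : f ≫ g = 0),
      (ShortComplex.mk f g w).ShortExact ∧ Module.Finite A K := by
  obtain ⟨n, g, hg⟩ := Module.Finite.exists_fin' A M
  exact ⟨n, ModuleCat.of A (LinearMap.ker g), ModuleCat.ofHom (LinearMap.ker g).subtype,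
    ModuleCat.ofHom g, ModuleCat.hom_ext (LinearMap.ext fun x ↦ x.2),
    ModuleCat.shortExact_ofHom Subtype.val_injective hg g.exact_subtype_ker_map,
    inferInstanceAs (Module.Finite A (LinearMap.ker g))⟩

include hlt hgt

theorem pairing_bijective (q : ℕ) : ∀ (p : ℕ) (h : p + q = d) (M : ModuleCat.{u} A)
    [Module.Finite A M],
    Function.Bijective (pairing (maximalIdeal A) h (ModuleCat.of A A) M) := by
  have hB : Module.Baer A (LocCoh (maximalIdeal A) d (ModuleCat.of A A)) := baer hlt (hgt _)
  induction q with
  | zero =>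
    intro p h M _
    obtain rfl : p = d := by simpa using h
    have hsurj (M : ModuleCat.{u} A) [Module.Finite A M] :
        Function.Surjective (pairing (maximalIdeal A) h (ModuleCat.of A A) M) := by
      obtain ⟨n, K, f, g, w, hS, _⟩ := exists_shortExact_free M
      exact pairing_surjective_of_shortExact_of_baer hS hB h (pairing_free_bijective n h).2
    obtain ⟨n, K, f, g, w, hS, _⟩ := exists_shortExact_free M
    exact ⟨pairing_injective_of_shortExact_of_baer hS hB h (hsurj K)
      (pairing_free_bijective n h).1 (subsingleton_of_residueField K _ (hgt K)), hsurj M⟩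
  | succ q ih =>
    intro p h M _
    have h' : (p + 1) + q = d := by lia
    obtain ⟨n, K, f, g, w, hS, _⟩ := exists_shortExact_free M
    exact ⟨pairing_injective_of_shortExact hS h h' (ih (p + 1) h' K).1
        (subsingleton_of_residueField (ModuleCat.of A (Fin n → A)) p
          (subsingleton_ext_free n _ p (hlt p (by lia)))),
      pairing_surjective_of_shortExact hS h h' (ih (p + 1) h' K).2
        (ih (p + 1) h' (ModuleCat.of A (Fin n → A))).1
        (subsingleton_of_forall_eq 0 fun e ↦ Ext.eq_zero_of_projective e)⟩

end Duality
end LocCoh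

/-- Local duality: let `A` be a regular local Noetherian ring of dimension `d` with
maximal ideal `m` (regularity being expressed by the condition that `m` is generated by
`d = dim A` elements).  Then for every finitely generated `A`-module `M` and every
`p` with `p + q = d`, there is an isomorphism
`H^p_m(M) ≅ Hom_A(Ext^{d-p}_A(M, A), H^d_m(A))`. -/
theorem local_duality (A : Type u) [CommRing A] [IsNoetherianRing A] [IsLocalRing A]
    (d : ℕ) (hdim : ringKrullDim A = d)
    (hreg : ∃ s : Finset A, s.card = d ∧ Ideal.span (s : Set A) = maximalIdeal A)
    (M : Type u) [AddCommGroup M] [Module A M] [Module.Finite A M]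
    (p q : ℕ) (hpq : p + q = d) :
    Nonempty ((((localCohomology (maximalIdeal A) p).obj (ModuleCat.of A M))) ≃ₗ[A]
      ((((Ext A (ModuleCat.{u} A) q).obj (op (ModuleCat.of A M))).obj (ModuleCat.of A A))
        →ₗ[A] ((localCohomology (maximalIdeal A) d).obj (ModuleCat.of A A)))) := by
  obtain ⟨s, hs, hspan⟩ := hreg
  obtain ⟨-, rs, rfl, hreg, hrs⟩ :=
    exists_isWeaklyRegular_of_card_le d A hdim ⟨s, hs.le, hspan⟩
  have hlt := subsingleton_ext_residueField_of_isWeaklyRegular rs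
    (fun r hr ↦ hrs ▸ Ideal.subset_span hr) (ModuleCat.of A A) hreg
  have hgt (Y : ModuleCat.{u} A) := subsingleton_ext_residueField_of_length_lt rs hrs hreg Y
    (rs.length + 1) (Nat.lt_succ_self _)
  have := LocCoh.pairing_bijective hlt hgt q p hpq (ModuleCat.of A M)
  exact ⟨(localCohomologyIso _ p _).toLinearEquiv ≪≫ₗ LinearEquiv.ofBijective _ this ≪≫ₗ
    LinearEquiv.arrowCongr (ModuleCat.extIso _ _ q).toLinearEquiv.symm
      (localCohomologyIso _ _ _).toLinearEquiv.symm⟩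
end

section
/- In a local Cohen-Macaulay ring, any two maximal chains of prime ideals have the same length; in particular every maximal chain of primes ending at the maximal ideal has length equal to dim A. -/
universe u

/-- A (local) ring `A` is Cohen-Macaulay if it admits a regular sequence of non-units
whose length equals `dim A`, i.e. `depth A = dim A`. -/
def IsCohenMacaulayLocalRing (A : Type u) [CommRing A] : Prop :=
  ∃ rs : List A, (∀ a ∈ rs, ¬ IsUnit a) ∧ RingTheory.Sequence.IsRegular A rs ∧
    (rs.length : WithBot ℕ∞) = ringKrullDim A

/-- A chain of prime ideals `P_0 < P_1 < ⋯ < P_l` is maximal if `P_0` is a minimal prime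
(no prime lies strictly below it), `P_l` is the maximal ideal, and no prime lies strictly
between two consecutive members of the chain. -/
def IsMaximalPrimeChain (A : Type u) [CommRing A] [IsLocalRing A]
    (c : LTSeries (PrimeSpectrum A)) : Prop :=
  (∀ q : PrimeSpectrum A, ¬ q < c.head) ∧
    c.last.asIdeal = IsLocalRing.maximalIdeal A ∧
    ∀ i : Fin c.length, ∀ q : PrimeSpectrum A,
      ¬ (c.toFun i.castSucc < q ∧ q < c.toFun i.succ)

open CategoryTheory Abelian Pointwise

/-- If `x` is `M`-regular and `P` is an associated prime of `M`, then every prime minimal over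
`P + (x)` is an associated prime of `M / xM`. -/
theorem mem_associatedPrimes_quotSMulTop {A : Type*} [CommRing A] [IsNoetherianRing A]
    {M : Type*} [AddCommGroup M] [Module A M] [Module.Finite A M] {x : A}
    (hx : IsSMulRegular M x) {P Q : Ideal A} (hP : P ∈ associatedPrimes A M)
    (hQ : Q ∈ (P ⊔ Ideal.span {x}).minimalPrimes) :
    Q ∈ associatedPrimes A (QuotSMulTop x M) := by
  obtain ⟨-, y, hy⟩ := isAssociatedPrime_iff.mp hP
  have mem_P (a : A) : a ∈ P ↔ a • y = 0 := by
    rw [hy, Submodule.mem_colon_singleton, Submodule.mem_bot]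
  let N := Submodule.torsionBySet A M P
  have hN (m : M) : m ∈ N ↔ ∀ a ∈ P, a • m = 0 := by
    simp [N, Submodule.mem_torsionBySet_iff]
  have hann : Module.annihilator A N = P := by
    ext a
    rw [Module.mem_annihilator]
    constructor
    · intro h
      exact (mem_P a).mpr
        (congrArg Subtype.val (h ⟨y, (hN y).mpr fun b hb ↦ (mem_P b).mp hb⟩))
    · intro ha m
      exact Subtype.ext ((hN m).mp m.2 a ha)
  have hinj : Function.Injective (QuotSMulTop.map x N.subtype) := by
    rw [injective_iff_map_eq_zero]
    intro n hn
    obtain ⟨n, rfl⟩ := Submodule.mkQ_surjective _ n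
    obtain ⟨m, -, hm⟩ := (Submodule.Quotient.mk_eq_zero (x • (⊤ : Submodule A M))).mp hn
    replace hm : x • m = n := hm
    refine (Submodule.Quotient.mk_eq_zero (x • (⊤ : Submodule A N))).mpr
      ⟨⟨m, (hN m).mpr fun a ha ↦ hx ?_⟩, trivial, Subtype.ext hm⟩
    change x • a • m = x • 0
    rw [smul_comm, hm, smul_zero, (hN n).mp n.2 a ha]
  refine associatedPrimes.subset_of_injective hinj
    (Module.associatedPrimes.minimalPrimes_annihilator_subset_associatedPrimes A _ ?_)
  have key (q : PrimeSpectrum A) : Module.annihilator A (QuotSMulTop x N) ≤ q.asIdeal ↔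
      P ⊔ Ideal.span {x} ≤ q.asIdeal := by
    rw [← Module.mem_support_iff_of_finite, Module.support_quotSMulTop, Set.mem_inter_iff,
      Module.mem_support_iff_of_finite, hann, sup_le_iff, Ideal.span_singleton_le_iff_mem]
    simp
  refine ⟨⟨hQ.1.1, (key ⟨Q, hQ.1.1⟩).mpr hQ.1.2⟩, fun q hq hqQ ↦ ?_⟩
  exact hQ.2 ⟨hq.1, (key ⟨q, hq.1⟩).mp hq.2⟩ hqQ

theorem IsSMulRegular.notMem_of_mem_associatedPrimes {A : Type*} [CommRing A]
    [IsNoetherianRing A] {M : Type*} [AddCommGroup M] [Module A M] {x : A}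
    (hx : IsSMulRegular M x) {P : Ideal A} (hP : P ∈ associatedPrimes A M) : x ∉ P := by
  intro hxP
  have h : x ∈ ⋃ p ∈ associatedPrimes A M, (p : Set A) := Set.mem_biUnion hP hxP
  rw [biUnion_associatedPrimes_eq_compl_regular] at h
  exact h hx

/-- If `Extⁱ(N, M)` vanishes for `i ≤ n` and `x` is `M`-regular, then `Extⁱ(N, M / xM)` vanishes
for `i < n`. -/
theorem subsingleton_ext_quotSMulTop {A : Type u} [CommRing A] {N : ModuleCat.{u} A}
    {M : Type u} [AddCommGroup M] [Module A M] {x : A} (hx : IsSMulRegular M x) {n : ℕ}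
    (h : ∀ i < n + 1, Subsingleton (Ext N (ModuleCat.of A M) i)) :
    ∀ i < n, Subsingleton (Ext N (ModuleCat.of A (QuotSMulTop x M)) i) := by
  intro i hi
  have zero1 := AddCommGrpCat.isZero_of_iff_subsingleton.mpr (h i (by lia))
  have zero2 := AddCommGrpCat.isZero_of_iff_subsingleton.mpr (h (i + 1) (by lia))
  have hx' : IsSMulRegular (ModuleCat.of A M) x := hx
  exact AddCommGrpCat.subsingleton_of_isZero <| ShortComplex.Exact.isZero_of_both_zeros
    ((Ext.covariant_sequence_exact₃' N hx'.smulShortComplex_shortExact) i (i + 1) rfl)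
    (zero1.eq_zero_of_src _) (zero2.eq_zero_of_tgt _)

section IsLocalRing

variable {A : Type u} [CommRing A] [IsNoetherianRing A] [IsLocalRing A]

open IsLocalRing

theorem exists_isSMulRegular_of_subsingleton_ext {M : Type u} [AddCommGroup M] [Module A M]
    [Module.Finite A M]
    (h : Subsingleton (Ext (ModuleCat.of A (A ⧸ maximalIdeal A)) (ModuleCat.of A M) 0)) :
    ∃ x ∈ maximalIdeal A, IsSMulRegular M x := by
  have : Subsingleton ((A ⧸ maximalIdeal A) →ₗ[A] M) :=
    ((Ext.addEquiv₀ (X := ModuleCat.of A (A ⧸ maximalIdeal A)) (Y := ModuleCat.of A M)).trans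
      ModuleCat.homAddEquiv).symm.subsingleton
  simpa only [Ideal.annihilator_quotient] using IsSMulRegular.subsingleton_linearMap_iff.mp this

/-- If `Extⁱ(k, M)` vanishes for `i < n` then `dim A / P ≥ n` for every associated prime `P`
of `M`. -/
theorem le_coheight_of_mem_associatedPrimes (n : ℕ) {M : Type u} [AddCommGroup M] [Module A M]
    [Module.Finite A M]
    (h : ∀ i < n, Subsingleton
      (Ext (ModuleCat.of A (A ⧸ maximalIdeal A)) (ModuleCat.of A M) i))
    (P : PrimeSpectrum A) (hP : P.asIdeal ∈ associatedPrimes A M) :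
    (n : ℕ∞) ≤ Order.coheight P := by
  induction n generalizing M P with
  | zero => simp
  | succ n ih =>
    obtain ⟨x, hxm, hx⟩ := exists_isSMulRegular_of_subsingleton_ext (h 0 n.succ_pos)
    have hle : P.asIdeal ⊔ Ideal.span {x} ≤ maximalIdeal A :=
      sup_le (le_maximalIdeal P.2.ne_top) ((Ideal.span_singleton_le_iff_mem _).mpr hxm)
    obtain ⟨Q, hQ, -⟩ := Ideal.exists_minimalPrimes_le hle
    have hlt : P < ⟨Q, hQ.1.1⟩ := by
      refine lt_of_le_of_ne (le_sup_left.trans hQ.1.2) fun e ↦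
        hx.notMem_of_mem_associatedPrimes hP ?_
      rw [e]
      exact hQ.1.2 (Ideal.mem_sup_right (Ideal.mem_span_singleton_self x))
    have := ih (subsingleton_ext_quotSMulTop hx h) ⟨Q, hQ.1.1⟩
      (mem_associatedPrimes_quotSMulTop hx hP hQ)
    push_cast
    exact (add_le_add_left this 1).trans (Order.coheight_add_one_le hlt)

/-- A saturated chain of primes from an associated prime of a Cohen-Macaulay module `M` of
dimension `n` to the maximal ideal has length at least `n`. -/
theorem le_length_of_covBy_chain (n l : ℕ) {M : Type u} [AddCommGroup M] [Module A M]
    [Module.Finite A M]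
    (h : ∀ i < n, Subsingleton
      (Ext (ModuleCat.of A (A ⧸ maximalIdeal A)) (ModuleCat.of A M) i))
    (hdim : ∀ P ∈ Module.support A M, Order.coheight P ≤ n)
    (f : ℕ → PrimeSpectrum A) (hf : ∀ i < l, f i ⋖ f (i + 1))
    (hl : (f l).asIdeal = maximalIdeal A) (h0 : (f 0).asIdeal ∈ associatedPrimes A M) :
    n ≤ l := by
  induction n generalizing M l f with
  | zero => exact l.zero_le
  | succ n ih =>
    obtain ⟨x, hxm, hx⟩ := exists_isSMulRegular_of_subsingleton_ext (h 0 n.succ_pos)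
    cases l with
    | zero => exact absurd (hl ▸ hxm) (hx.notMem_of_mem_associatedPrimes h0)
    | succ l =>
      have hcov := hf 0 l.succ_pos
      have hsupp {Q : PrimeSpectrum A} (hQ : Q.asIdeal ∈ associatedPrimes A M) :
          Order.coheight Q ≤ (n + 1 : ℕ) :=
        hdim Q <| Module.mem_support_iff_of_finite.mpr <|
          Submodule.annihilator_top.symm.trans_le (IsAssociatedPrime.annihilator_le hQ)
      obtain ⟨y, hy1, hy⟩ : ∃ y ∈ (f 1).asIdeal, IsSMulRegular M y := by
        by_contra! hreg
        have hsub : ((f 1).asIdeal : Set A) ⊆ ⋃ p ∈ associatedPrimes A M, (p : Set A) := by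
          rw [biUnion_associatedPrimes_eq_compl_regular]
          exact hreg
        obtain ⟨Q, hQ, hle⟩ := (Ideal.subset_union_prime_finite (associatedPrimes.finite A M)
          (f := id) 0 0 fun _ hp _ _ ↦ hp.1).mp hsub
        have hlt : f 0 < ⟨Q, hQ.1⟩ := hcov.lt.trans_le hle
        have h1 := le_coheight_of_mem_associatedPrimes (n + 1) h ⟨Q, hQ.1⟩ hQ
        have h2 := (add_le_add_left h1 1).trans ((Order.coheight_add_one_le hlt).trans (hsupp h0))
        norm_cast at h2
        lia
      have hmin : (f 1).asIdeal ∈ ((f 0).asIdeal ⊔ Ideal.span {y}).minimalPrimes := by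
        refine ⟨⟨(f 1).2, sup_le hcov.le ((Ideal.span_singleton_le_iff_mem _).mpr hy1)⟩,
          fun q hq hq1 ↦ ?_⟩
        have hlt : f 0 < ⟨q, hq.1⟩ := by
          refine lt_of_le_of_ne (le_sup_left.trans hq.2) fun e ↦
            hy.notMem_of_mem_associatedPrimes h0 ?_
          rw [e]
          exact hq.2 (Ideal.mem_sup_right (Ideal.mem_span_singleton_self y))
        by_contra hnle
        exact hcov.2 hlt (lt_of_le_not_ge (b := f 1) hq1 hnle)
      refine Nat.succ_le_succ (ih l (subsingleton_ext_quotSMulTop hy h) (fun P hP ↦ ?_)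
        (fun i ↦ f (i + 1)) (fun i hi ↦ hf (i + 1) (by lia)) hl
        (mem_associatedPrimes_quotSMulTop hy h0 hmin))
      rw [Module.support_quotSMulTop, Set.mem_inter_iff, Module.mem_support_iff_of_finite] at hP
      obtain ⟨Q, hQ, hQP⟩ := Ideal.exists_minimalPrimes_le hP.1
      have hQass : Q ∈ associatedPrimes A M :=
        Module.associatedPrimes.minimalPrimes_annihilator_subset_associatedPrimes A M hQ
      have hlt : (⟨Q, hQ.1.1⟩ : PrimeSpectrum A) < P := by
        refine lt_of_le_of_ne hQP fun e ↦ hy.notMem_of_mem_associatedPrimes hQass ?_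
        subst e
        simpa using hP.2
      have h3 := (Order.coheight_add_one_le hlt).trans (hsupp (Q := ⟨Q, hQ.1.1⟩) hQass)
      push_cast at h3
      exact (ENat.add_le_add_iff_right ENat.one_ne_top).mp h3

theorem IsMaximalPrimeChain.length_eq_ringKrullDim (hCM : IsCohenMacaulayLocalRing A)
    {c : LTSeries (PrimeSpectrum A)} (hc : IsMaximalPrimeChain A c) :
    (c.length : WithBot ℕ∞) = ringKrullDim A := by
  obtain ⟨rs, hrs, hreg, hdim⟩ := hCM
  obtain ⟨hhead, hlast, hcov⟩ := hc
  refine le_antisymm (Order.LTSeries.length_le_krullDim c) ?_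
  rw [← hdim]
  have hlt : maximalIdeal A • (⊤ : Submodule A (ModuleCat.of A A)) < ⊤ := by
    change maximalIdeal A • (⊤ : Ideal A) < ⊤
    simpa using (Ideal.IsPrime.ne_top' (I := maximalIdeal A)).lt_top
  have hext := ModuleCat.subsingleton_ext_of_exists_isRegular (maximalIdeal A)
    (ModuleCat.of A (A ⧸ maximalIdeal A))
    (by rw [Module.support_eq_zeroLocus, Ideal.annihilator_quotient]) (ModuleCat.of A A) hlt rs
    hrs hreg
  have hmem : c.head.asIdeal ∈ associatedPrimes A A := by
    refine Module.associatedPrimes.minimalPrimes_annihilator_subset_associatedPrimes A A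
      ⟨⟨c.head.2, ?_⟩, fun q hq hle ↦ ?_⟩
    · simp [Module.annihilator_eq_bot.mpr inferInstance]
    · by_contra hnle
      exact hhead ⟨q, hq.1⟩ (lt_of_le_not_ge (b := c.head) hle hnle)
  have key := le_length_of_covBy_chain rs.length c.length hext
    (fun P _ ↦ by
      have := Order.coheight_le_krullDim P
      rw [← ringKrullDim, ← hdim] at this
      exact_mod_cast this)
    (fun i ↦ c.toFun ⟨min i c.length, by lia⟩)
    (fun i hi ↦ by
      have e1 : (⟨min i c.length, by lia⟩ : Fin (c.length + 1)) = Fin.castSucc ⟨i, hi⟩ :=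
        Fin.ext (by simp; lia)
      have e2 : (⟨min (i + 1) c.length, by lia⟩ : Fin (c.length + 1)) = Fin.succ ⟨i, hi⟩ :=
        Fin.ext (by simp; lia)
      rw [e1, e2]
      exact ⟨c.step ⟨i, hi⟩, fun q h1 h2 ↦ hcov ⟨i, hi⟩ q ⟨h1, h2⟩⟩)
    (by simpa [RelSeries.last, Fin.last] using hlast)
    (by simpa [RelSeries.head] using hmem)
  exact_mod_cast key

end IsLocalRing

/-- In a local Cohen-Macaulay ring, any two maximal chains of prime ideals have the same
length; in particular every maximal chain of primes (which necessarily ends at the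
maximal ideal) has length equal to `dim A`. -/
theorem maximalPrimeChains_same_length (A : Type u) [CommRing A] [IsNoetherianRing A]
    [IsLocalRing A] (hCM : IsCohenMacaulayLocalRing A) :
    (∀ c₁ c₂ : LTSeries (PrimeSpectrum A),
      IsMaximalPrimeChain A c₁ → IsMaximalPrimeChain A c₂ → c₁.length = c₂.length) ∧
    (∀ c : LTSeries (PrimeSpectrum A), IsMaximalPrimeChain A c →
      (c.length : WithBot ℕ∞) = ringKrullDim A) := by
  refine ⟨fun c₁ c₂ h₁ h₂ ↦ ?_, fun c hc ↦ hc.length_eq_ringKrullDim hCM⟩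
  exact_mod_cast
    (h₁.length_eq_ringKrullDim hCM).trans (h₂.length_eq_ringKrullDim hCM).symm
end
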